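/- arXiv:2405.19809 — 15 statements merged into one kernel-verified Lean document; each statement's English description precedes it below -/
import Mathlib

section
/- Let E be a finite-dimensional real inner product space, F : E → ℝ a differentiable function and L > 0. Then the gradient of F is L-Lipschitz if and only if for all x, y ∈ E one has F(x) + ⟨∇F(x), y − x⟩ − (L/2)‖x − y‖² ≤ F(y) ≤ F(x) + ⟨∇F(x), y − x⟩ + (L/2)‖x − y‖². (In particular the two-sided quadratic bound implies the Lipschitz gradient property without any convexity assumption.) -/
open scoped RealInnerProductSpace

/-- The descent lemma: a function with `L`-Lipschitz gradient differs from its first-order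
expansion by at most `L / 2 * ‖y - x‖ ^ 2`. -/
theorem abs_sub_firstOrder_le_of_lipschitz_gradient {E : Type*} [NormedAddCommGroup E]
    [InnerProductSpace ℝ E] [CompleteSpace E] {F : E → ℝ} {G : E → E} {L : ℝ}
    (hG : ∀ x, HasGradientAt F (G x) x) (hLip : ∀ x y, ‖G x - G y‖ ≤ L * ‖x - y‖) (x y : E) :
    |F y - F x - ⟪G x, y - x⟫| ≤ L / 2 * ‖y - x‖ ^ 2 := by
  set v := y - x with hv
  have hline (t : ℝ) : HasDerivAt (fun t : ℝ => x + t • v) v t := by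
    simpa using ((hasDerivAt_id t).smul_const v).const_add x
  have hderiv (t : ℝ) : HasDerivAt (fun t : ℝ => F (x + t • v) - F x - t * ⟪G x, v⟫)
      (⟪G (x + t • v) - G x, v⟫) t := by
    have hcomp := (hG (x + t • v)).hasFDerivAt.comp_hasDerivAt t (hline t)
    have hsub := (hcomp.sub_const (F x)).sub ((hasDerivAt_id t).mul_const ⟪G x, v⟫)
    exact hsub.congr_deriv (by simp [inner_sub_left])
  have hbound (t : ℝ) : HasDerivAt (fun t : ℝ => L / 2 * ‖v‖ ^ 2 * t ^ 2) (L * ‖v‖ ^ 2 * t) t := by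
    exact ((hasDerivAt_pow 2 t).const_mul (L / 2 * ‖v‖ ^ 2)).congr_deriv (by push_cast; ring)
  have key := image_norm_le_of_norm_deriv_right_le_deriv_boundary (a := 0) (b := 1)
    (fun t _ => (hderiv t).continuousAt.continuousWithinAt)
    (fun t _ => (hderiv t).hasDerivWithinAt) (by simp) hbound
    (fun t ht => by
      calc ‖⟪G (x + t • v) - G x, v⟫‖ ≤ ‖G (x + t • v) - G x‖ * ‖v‖ := norm_inner_le_norm _ _
        _ ≤ L * ‖x + t • v - x‖ * ‖v‖ := by gcongr; exact hLip _ _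
        _ = L * ‖v‖ ^ 2 * t := by
          rw [add_sub_cancel_left, norm_smul, Real.norm_of_nonneg ht.1]
          ring)
    (Set.right_mem_Icc.2 zero_le_one)
  simpa [hv] using key

/-- A two-sided quadratic bound on the first-order expansion forces the first-order coefficient to
be Lipschitz; no convexity is needed. -/
theorem lipschitz_of_abs_sub_firstOrder_le {E : Type*} [NormedAddCommGroup E]
    [InnerProductSpace ℝ E] {F : E → ℝ} {G : E → E} {L : ℝ} (hL : 0 < L)
    (h : ∀ x y, |F y - F x - ⟪G x, y - x⟫| ≤ L / 2 * ‖y - x‖ ^ 2) (x y : E) :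
    ‖G x - G y‖ ≤ L * ‖x - y‖ := by
  set d := G x - G y with hd
  set a := (2⁻¹ : ℝ) • (x - y) with ha
  set u := (2 * L)⁻¹ • d with hu
  -- compare the expansions at `x` and `y` at the two points `midpoint ± u`
  have hx : x = y + a + a := by rw [ha]; module
  have hxz := (abs_le.1 (h x (y + a + u))).1
  have hyz := (abs_le.1 (h y (y + a + u))).2
  have hxw := (abs_le.1 (h x (y + a - u))).2
  have hyw := (abs_le.1 (h y (y + a - u))).1
  rw [show y + a + u - x = u - a by rw [hx]; abel] at hxz
  rw [show y + a + u - y = a + u by abel] at hyz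
  rw [show y + a - u - x = -(a + u) by rw [hx]; abel, norm_neg, inner_neg_right] at hxw
  rw [show y + a - u - y = -(u - a) by abel, norm_neg, inner_neg_right] at hyw
  have hpar : ‖a + u‖ ^ 2 + ‖u - a‖ ^ 2 = 2 * (‖a‖ ^ 2 + ‖u‖ ^ 2) := by
    rw [norm_add_sq_real, norm_sub_sq_real, real_inner_comm]
    ring
  have hdu : ⟪d, u⟫ ≤ L * (‖a‖ ^ 2 + ‖u‖ ^ 2) := by
    simp only [inner_add_right, inner_sub_right] at hxz hyz hxw hyw
    rw [hd, inner_sub_left]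
    linear_combination (hxz + hyz + hxw + hyw) / 2 + L / 2 * hpar
  have hnu : ‖u‖ = (2 * L)⁻¹ * ‖d‖ := by
    rw [hu, norm_smul, Real.norm_of_nonneg (by positivity)]
  have hna : ‖a‖ = 2⁻¹ * ‖x - y‖ := by
    rw [ha, norm_smul, Real.norm_of_nonneg (by positivity)]
  rw [hnu, hna, hu, real_inner_smul_right, real_inner_self_eq_norm_sq] at hdu
  refine le_of_sq_le_sq ?_ (by positivity)
  field_simp at hdu
  nlinarith

/-- For a differentiable `F : E → ℝ` on a finite-dimensional real inner
product space and `L > 0`, the gradient of `F` is `L`-Lipschitz iff `F` satisfies the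
two-sided quadratic bound
`F x + ⟪∇F x, y - x⟫ - L/2 ‖x-y‖² ≤ F y ≤ F x + ⟪∇F x, y - x⟫ + L/2 ‖x-y‖²`. -/
theorem stmt_0 {E : Type*} [NormedAddCommGroup E] [InnerProductSpace ℝ E]
    [FiniteDimensional ℝ E]
    (F : E → ℝ) (hF : Differentiable ℝ F) (L : ℝ) (hL : 0 < L) :
    (∀ x y : E, ‖gradient F x - gradient F y‖ ≤ L * ‖x - y‖) ↔
    (∀ x y : E,
      F x + ⟪gradient F x, y - x⟫ - L / 2 * ‖x - y‖ ^ 2 ≤ F y ∧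
      F y ≤ F x + ⟪gradient F x, y - x⟫ + L / 2 * ‖x - y‖ ^ 2) := by
  constructor
  · intro h x y
    have := abs_le.1 (abs_sub_firstOrder_le_of_lipschitz_gradient
      (fun x => (hF x).hasGradientAt) h x y)
    rw [norm_sub_rev x y]
    constructor <;> linarith
  · intro h
    refine lipschitz_of_abs_sub_firstOrder_le (F := F) hL fun x y => abs_le.2 ?_
    have := h x y
    rw [norm_sub_rev x y] at this
    constructor <;> linarith
end

section
/- Let F : E → ℝ be L-smooth and (γ,μ)-strongly quasar convex with respect to its minimizer x*, where 0 < μ ≤ L and γ ∈ (0,1]. Let 0 < s ≤ 1/L and let (x_n) be generated by gradient descent x_{n+1} = x_n − s∇F(x_n) from any x₀. Then for all n ∈ ℕ, F(x_n) − F(x*) ≤ (2/γ)(1 − γμs)ⁿ (F(x₀) − F(x*)). -/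
open scoped RealInnerProductSpace

section QuasarConvex

variable {E : Type*} [NormedAddCommGroup E] [InnerProductSpace ℝ E] [CompleteSpace E]

/-- The derivative of a differentiable function along a line, in terms of the gradient. -/
lemma hasDerivAt_comp_line_gradient {F : E → ℝ} (hF : Differentiable ℝ F) (x v : E) (t : ℝ) :
    HasDerivAt (fun r : ℝ => F (x + r • v)) ⟪gradient F (x + t • v), v⟫ t := by
  have hline : HasDerivAt (fun r : ℝ => x + r • v) v t := by
    simpa using ((hasDerivAt_id t).smul_const v).const_add x
  have hgrad := (hF (x + t • v)).hasGradientAt.hasFDerivAt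
  simpa [Function.comp_def] using hgrad.comp_hasDerivAt t hline

/-- The descent lemma: a function with `L`-Lipschitz gradient lies below its quadratic upper
model. -/
lemma le_quadratic_upper_bound_of_lipschitz_gradient {F : E → ℝ} (hF : Differentiable ℝ F) {L : ℝ}
    (hLip : ∀ x y : E, ‖gradient F x - gradient F y‖ ≤ L * ‖x - y‖) (x v : E) :
    F (x + v) ≤ F x + ⟪gradient F x, v⟫ + L / 2 * ‖v‖ ^ 2 := by
  let φ : ℝ → ℝ := fun t => F (x + t • v) - t * ⟪gradient F x, v⟫ - L / 2 * ‖v‖ ^ 2 * t ^ 2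
  have hφ : ∀ t, HasDerivAt φ
      (⟪gradient F (x + t • v), v⟫ - ⟪gradient F x, v⟫ - L * ‖v‖ ^ 2 * t) t := by
    intro t
    have h := ((hasDerivAt_comp_line_gradient hF x v t).sub
      ((hasDerivAt_id t).mul_const ⟪gradient F x, v⟫)).sub
      (((hasDerivAt_id t).pow 2).const_mul (L / 2 * ‖v‖ ^ 2))
    refine h.congr_deriv ?_
    simp only [id_eq]
    push_cast
    ring
  have hanti : AntitoneOn φ (Set.Ici 0) := by
    refine antitoneOn_of_deriv_nonpos (convex_Ici 0)
      (fun t _ => (hφ t).continuousAt.continuousWithinAt)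
      (fun t _ => (hφ t).differentiableAt.differentiableWithinAt) ?_
    intro t ht
    rw [interior_Ici] at ht
    have ht0 : 0 < t := ht
    rw [(hφ t).deriv, ← inner_sub_left]
    have hnorm := hLip (x + t • v) x
    rw [add_sub_cancel_left, norm_smul, Real.norm_of_nonneg ht0.le] at hnorm
    have hcs := real_inner_le_norm (gradient F (x + t • v) - gradient F x) v
    nlinarith [mul_le_mul_of_nonneg_right hnorm (norm_nonneg v)]
  have h := hanti (Set.mem_Ici.2 le_rfl) (Set.mem_Ici.2 zero_le_one) zero_le_one
  simp only [φ, one_smul, zero_smul, add_zero] at h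
  linarith

/-- If `γ h(t) ≤ t h'(t)` for `t > 0`, then `t ↦ t ^ (-γ) h(t)` is monotone on `(0, ∞)`. -/
lemma monotoneOn_rpow_neg_mul {h h' : ℝ → ℝ} {γ : ℝ} (hd : ∀ t, 0 < t → HasDerivAt h (h' t) t)
    (hle : ∀ t, 0 < t → γ * h t ≤ t * h' t) :
    MonotoneOn (fun t : ℝ => t ^ (-γ) * h t) (Set.Ioi 0) := by
  have hderiv : ∀ t, 0 < t → HasDerivAt (fun t : ℝ => t ^ (-γ) * h t)
      (t ^ (-γ - 1) * (t * h' t - γ * h t)) t := by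
    intro t ht
    refine ((Real.hasDerivAt_rpow_const (p := -γ) (Or.inl ht.ne')).mul (hd t ht)).congr_deriv ?_
    have hpow : t ^ (-γ) = t ^ (-γ - 1) * t := by
      rw [Real.rpow_sub_one ht.ne', div_mul_cancel₀ _ ht.ne']
    rw [hpow]
    ring
  refine monotoneOn_of_deriv_nonneg (convex_Ioi 0)
    (fun t ht => (hderiv t ht).continuousAt.continuousWithinAt) ?_ ?_
  · intro t ht
    rw [interior_Ioi] at ht
    exact (hderiv t ht).differentiableAt.differentiableWithinAt
  · intro t ht
    rw [interior_Ioi] at ht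
    rw [(hderiv t ht).deriv]
    exact mul_nonneg (Real.rpow_nonneg (le_of_lt ht) _) (sub_nonneg.2 (hle t ht))

/-- Strongly quasar convex functions grow quadratically away from the minimizer. -/
lemma quadratic_growth_of_strongly_quasar_convex {F : E → ℝ} (hF : Differentiable ℝ F) {μ γ : ℝ}
    (hμ : 0 < μ) (hγ0 : 0 < γ) (hγ1 : γ ≤ 1) {xstar : E} (hmin : ∀ x : E, F xstar ≤ F x)
    (hqc : ∀ x : E,
      F xstar ≥ F x + (1 / γ) * ⟪gradient F x, xstar - x⟫ + μ / 2 * ‖xstar - x‖ ^ 2) (x : E) :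
    γ * (μ / 2 * ‖x - xstar‖ ^ 2) ≤ (2 - γ) * (F x - F xstar) := by
  set v := x - xstar with hv
  set a := γ * (μ / 2 * ‖v‖ ^ 2) with ha
  have ha0 : 0 ≤ a := by positivity
  let h : ℝ → ℝ := fun t => (2 - γ) * (F (xstar + t • v) - F xstar) - a * t ^ 2
  have hd : ∀ t, 0 < t →
      HasDerivAt h ((2 - γ) * ⟪gradient F (xstar + t • v), v⟫ - 2 * a * t) t := by
    intro t _
    have h1 := (((hasDerivAt_comp_line_gradient hF xstar v t).sub_const (F xstar)).const_mul
      (2 - γ)).sub (((hasDerivAt_id t).pow 2).const_mul a)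
    refine h1.congr_deriv ?_
    simp only [id_eq]
    push_cast
    ring
  have hmono := monotoneOn_rpow_neg_mul (γ := γ) hd (by
    intro t ht
    have hq := hqc (xstar + t • v)
    rw [sub_add_cancel_left, inner_neg_right, inner_smul_right, norm_neg, norm_smul,
      Real.norm_of_nonneg ht.le, mul_pow] at hq
    have hγq := mul_le_mul_of_nonneg_left hq hγ0.le
    have hγγ : γ * (1 / γ) = 1 := by field_simp
    have hq' : γ * (F (xstar + t • v) - F xstar) + a * t ^ 2
        ≤ t * ⟪gradient F (xstar + t • v), v⟫ := by
      rw [ha]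
      linear_combination hγq + t * ⟪gradient F (xstar + t • v), v⟫ * hγγ
    have hγ2 : 0 ≤ 2 - γ := by linarith
    simp only [h]
    linear_combination (2 - γ) * hq')
  have hlower : ∀ t, 0 < t → t ≤ 1 → -(a * t) ≤ h 1 := by
    intro t ht ht1
    have hle := hmono ht (Set.mem_Ioi.2 one_pos) ht1
    simp only [Real.one_rpow, one_mul] at hle
    refine le_trans ?_ hle
    have hh : -(a * t ^ 2) ≤ h t := by
      have := mul_nonneg (by linarith : 0 ≤ 2 - γ) (sub_nonneg.2 (hmin (xstar + t • v)))
      simp only [h]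
      linarith
    have hpow : t ^ (-γ) * t ≤ 1 := by
      rw [← Real.rpow_add_one ht.ne']
      exact Real.rpow_le_one ht.le ht1 (by linarith)
    calc -(a * t) ≤ -(a * t * (t ^ (-γ) * t)) :=
          neg_le_neg (mul_le_of_le_one_right (by positivity) hpow)
      _ = t ^ (-γ) * -(a * t ^ 2) := by ring
      _ ≤ t ^ (-γ) * h t := mul_le_mul_of_nonneg_left hh (Real.rpow_nonneg ht.le _)
  have hnonneg : 0 ≤ h 1 := by
    have hlim : Filter.Tendsto (fun t : ℝ => -(a * t)) (nhdsWithin 0 (Set.Ioi 0)) (nhds 0) := by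
      have hc : Continuous fun t : ℝ => -(a * t) := by fun_prop
      simpa using (hc.tendsto 0).mono_left nhdsWithin_le_nhds
    refine le_of_tendsto hlim ?_
    filter_upwards [Ioc_mem_nhdsGT (zero_lt_one' ℝ)] with t ht
    exact hlower t ht.1 ht.2
  simp only [h, one_smul, hv, add_sub_cancel] at hnonneg
  linarith

/-- One gradient step contracts the energy `F x - F x⋆ + μ / 2 * ‖x - x⋆‖ ^ 2`. -/
lemma energy_gradient_step_le {F : E → ℝ} (hF : Differentiable ℝ F) {L μ γ s : ℝ}
    (hμ : 0 < μ) (hμL : μ ≤ L) (hγ0 : 0 < γ)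
    (hLip : ∀ x y : E, ‖gradient F x - gradient F y‖ ≤ L * ‖x - y‖) {xstar : E}
    (hqc : ∀ x : E,
      F xstar ≥ F x + (1 / γ) * ⟪gradient F x, xstar - x⟫ + μ / 2 * ‖xstar - x‖ ^ 2)
    (hs0 : 0 < s) (hs1 : s ≤ 1 / L) (x : E) :
    F (x - s • gradient F x) - F xstar + μ / 2 * ‖x - s • gradient F x - xstar‖ ^ 2
      ≤ (1 - γ * μ * s) * (F x - F xstar + μ / 2 * ‖x - xstar‖ ^ 2) := by
  have hsL : s * L ≤ 1 := (le_div_iff₀ (hμ.trans_le hμL)).1 hs1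
  have hsμ : s * μ ≤ 1 := (mul_le_mul_of_nonneg_left hμL hs0.le).trans hsL
  set g := gradient F x with hg
  have hdesc := le_quadratic_upper_bound_of_lipschitz_gradient hF hLip x (-(s • g))
  rw [← sub_eq_add_neg, ← hg, inner_neg_right, inner_smul_right, real_inner_self_eq_norm_sq,
    norm_neg, norm_smul, Real.norm_of_nonneg hs0.le, mul_pow] at hdesc
  have hq := hqc x
  rw [← neg_sub x xstar, inner_neg_right, norm_neg, ← hg] at hq
  have hγγ : γ * (1 / γ) = 1 := by field_simp
  have hq' : γ * (F x - F xstar + μ / 2 * ‖x - xstar‖ ^ 2) ≤ ⟪g, x - xstar⟫ := by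
    linear_combination γ * hq + ⟪g, x - xstar⟫ * hγγ
  have hdist : ‖x - s • g - xstar‖ ^ 2
      = ‖x - xstar‖ ^ 2 - 2 * (s * ⟪g, x - xstar⟫) + s ^ 2 * ‖g‖ ^ 2 := by
    rw [sub_right_comm, norm_sub_sq_real, inner_smul_right, real_inner_comm, norm_smul,
      Real.norm_of_nonneg hs0.le, mul_pow]
  rw [hdist]
  linear_combination hdesc + μ * s * hq' + s * ‖g‖ ^ 2 / 2 * hsL + s * ‖g‖ ^ 2 / 2 * hsμ

end QuasarConvex

/-- linear convergence of gradient descent for `L`-smooth,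
`(γ,μ)`-strongly quasar convex functions. -/
theorem stmt_1 {E : Type*} [NormedAddCommGroup E] [InnerProductSpace ℝ E]
    [FiniteDimensional ℝ E]
    (F : E → ℝ) (hF : Differentiable ℝ F)
    (L μ γ s : ℝ) (hμ : 0 < μ) (hμL : μ ≤ L) (hγ0 : 0 < γ) (hγ1 : γ ≤ 1)
    (hLip : ∀ x y : E, ‖gradient F x - gradient F y‖ ≤ L * ‖x - y‖)
    (xstar : E) (hmin : ∀ x : E, F xstar ≤ F x)
    (hqc : ∀ x : E,
      F xstar ≥ F x + (1 / γ) * ⟪gradient F x, xstar - x⟫ + μ / 2 * ‖xstar - x‖ ^ 2)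
    (hs0 : 0 < s) (hs1 : s ≤ 1 / L)
    (x : ℕ → E) (hrec : ∀ n : ℕ, x (n + 1) = x n - s • gradient F (x n)) :
    ∀ n : ℕ, F (x n) - F xstar ≤ 2 / γ * (1 - γ * μ * s) ^ n * (F (x 0) - F xstar) := by
  have hsμ : s * μ ≤ 1 := (mul_le_mul_of_nonneg_left hμL hs0.le).trans
    ((le_div_iff₀ (hμ.trans_le hμL)).1 hs1)
  have hrate : 0 ≤ 1 - γ * μ * s := by nlinarith [mul_pos hs0 hμ]
  have henergy : ∀ n, F (x n) - F xstar + μ / 2 * ‖x n - xstar‖ ^ 2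
      ≤ (1 - γ * μ * s) ^ n * (F (x 0) - F xstar + μ / 2 * ‖x 0 - xstar‖ ^ 2) := by
    intro n
    induction n with
    | zero => simp
    | succ n ih =>
      rw [hrec n, pow_succ' (1 - γ * μ * s), mul_assoc (1 - γ * μ * s)]
      exact (energy_gradient_step_le hF hμ hμL hγ0 hLip hqc hs0 hs1 (x n)).trans
        (mul_le_mul_of_nonneg_left ih hrate)
  have hinit : F (x 0) - F xstar + μ / 2 * ‖x 0 - xstar‖ ^ 2
      ≤ 2 / γ * (F (x 0) - F xstar) := by
    have := quadratic_growth_of_strongly_quasar_convex hF hμ hγ0 hγ1 hmin hqc (x 0)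
    rw [div_mul_eq_mul_div 2 γ, le_div_iff₀ hγ0]
    linarith
  intro n
  calc F (x n) - F xstar ≤ F (x n) - F xstar + μ / 2 * ‖x n - xstar‖ ^ 2 :=
        le_add_of_nonneg_right (by positivity)
    _ ≤ (1 - γ * μ * s) ^ n * (F (x 0) - F xstar + μ / 2 * ‖x 0 - xstar‖ ^ 2) := henergy n
    _ ≤ (1 - γ * μ * s) ^ n * (2 / γ * (F (x 0) - F xstar)) :=
        mul_le_mul_of_nonneg_left hinit (pow_nonneg hrate n)
    _ = 2 / γ * (1 - γ * μ * s) ^ n * (F (x 0) - F xstar) := by ring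
end

section
/- Let F : E → ℝ be differentiable, s > 0, μ > 0, γ ∈ (0,1], and let (x_n, y_n, z_n) be generated by Algorithm 1 with z₀ = x₀ and constant parameters α = 1/(1 + √(μs)), β = 1 − γ√(μs), η = √(s/μ). Then for all n ≥ 1: y_n = x_n + ((1 − γ√(μs))/(1 + √(μs)))(x_n − x_{n−1}) + (√(μs)/(1 + √(μs)))(γ − 1)(x_n − y_{n−1}), i.e. the 3-points scheme is equivalent to this 2-points momentum scheme together with x_{n+1} = y_n − s∇F(y_n). -/
open scoped RealInnerProductSpace

/-- the 3-points Nesterov scheme with constant parameters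
`α = 1/(1+√(μs))`, `β = 1-γ√(μs)`, `η = √(s/μ)` is equivalent to the 2-points
momentum scheme. -/
theorem stmt_4 {E : Type*} [NormedAddCommGroup E] [InnerProductSpace ℝ E]
    [FiniteDimensional ℝ E]
    (F : E → ℝ) (hF : Differentiable ℝ F)
    (s μ γ : ℝ) (hs : 0 < s) (hμ : 0 < μ) (hγ0 : 0 < γ) (hγ1 : γ ≤ 1)
    (x y z : ℕ → E) (hz0 : z 0 = x 0)
    (hy : ∀ n : ℕ, y n = (1 / (1 + Real.sqrt (μ * s))) • x n
      + (1 - 1 / (1 + Real.sqrt (μ * s))) • z n)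
    (hx : ∀ n : ℕ, x (n + 1) = y n - s • gradient F (y n))
    (hz : ∀ n : ℕ, z (n + 1) = (1 - γ * Real.sqrt (μ * s)) • z n
      + (γ * Real.sqrt (μ * s)) • y n - Real.sqrt (s / μ) • gradient F (y n)) :
    ∀ n : ℕ, y (n + 1) = x (n + 1)
      + ((1 - γ * Real.sqrt (μ * s)) / (1 + Real.sqrt (μ * s))) • (x (n + 1) - x n)
      + ((Real.sqrt (μ * s) / (1 + Real.sqrt (μ * s))) * (γ - 1)) • (x (n + 1) - y n) := by
  intro n
  have hr : 0 < Real.sqrt (μ * s) := Real.sqrt_pos.mpr (mul_pos hμ hs)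
  have hη : Real.sqrt (s / μ) = s / Real.sqrt (μ * s) := by
    rw [eq_div_iff hr.ne', ← Real.sqrt_mul (div_pos hs hμ).le,
      show s / μ * (μ * s) = s * s by field_simp, Real.sqrt_mul_self hs.le]
  rw [hy (n + 1), hz n, hx n, hη]
  generalize gradient F (y n) = g
  rw [hy n]
  generalize Real.sqrt (μ * s) = r at hr
  have hr1 : 1 + r ≠ 0 := by positivity
  match_scalars <;> field_simp <;> ring
end

section
/- Let F : E → ℝ be differentiable, s > 0, and let (α_n), (β_n), (η_n) be real sequences with α_n ∈ (0,1) for all n. Suppose sequences (x_n), (y_n), (z_n) satisfy y_n = α_n x_n + (1 − α_n) z_n, x_{n+1} = y_n − s∇F(y_n), z_{n+1} = β_n z_n + (1 − β_n) y_n − η_n ∇F(y_n). Then for all n ≥ 1: y_n = x_n + ((1 − α_n)/(1 − α_{n−1})) α_{n−1} β_{n−1} (x_n − x_{n−1}) + (1 − α_n)(η_{n−1}/s − α_{n−1}β_{n−1}/(1 − α_{n−1}) − 1)(x_n − y_{n−1}). -/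
open scoped RealInnerProductSpace

/-- the general 3-points Nesterov scheme with varying parameters
`α_n ∈ (0,1)`, `β_n`, `η_n` can be rewritten as a 2-points momentum scheme. -/
theorem stmt_5 {E : Type*} [NormedAddCommGroup E] [InnerProductSpace ℝ E]
    [FiniteDimensional ℝ E]
    (F : E → ℝ) (hF : Differentiable ℝ F)
    (s : ℝ) (hs : 0 < s)
    (α β η : ℕ → ℝ) (hα : ∀ n : ℕ, α n ∈ Set.Ioo (0 : ℝ) 1)
    (x y z : ℕ → E)
    (hy : ∀ n : ℕ, y n = (α n) • x n + (1 - α n) • z n)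
    (hx : ∀ n : ℕ, x (n + 1) = y n - s • gradient F (y n))
    (hz : ∀ n : ℕ, z (n + 1) = (β n) • z n + (1 - β n) • y n - (η n) • gradient F (y n)) :
    ∀ n : ℕ, y (n + 1) = x (n + 1)
      + (((1 - α (n + 1)) / (1 - α n)) * (α n * β n)) • (x (n + 1) - x n)
      + ((1 - α (n + 1)) * (η n / s - α n * β n / (1 - α n) - 1)) • (x (n + 1) - y n) := by
  intro n
  have h_one_sub : 1 - α n ≠ 0 := (sub_pos.mpr (hα n).2).ne'
  have h_step : s ≠ 0 := hs.ne'
  rw [hy (n + 1), hz n, hx n]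
  generalize gradient F (y n) = g
  rw [hy n]
  match_scalars <;> field_simp <;> ring
end

section
/- Let f : E → ℝ be continuously differentiable, γ ∈ (0,1), μ > 0 and x̂ ∈ E. Suppose that for all x ∈ E, f(x̂) ≥ f(x) + (1/γ)⟨∇f(x), x̂ − x⟩ + (μ/2)‖x̂ − x‖². Then ∇f(x̂) = 0. (Equivalently: the (γ,μ)-strong quasar convexity inequality with respect to a point x̂ with ∇f(x̂) ≠ 0 forces γ = 1.) -/
open scoped RealInnerProductSpace

/-- if a `C¹` function `f` satisfies the `(γ,μ)`-strong quasar
convexity inequality with respect to a point `x̂` for some `γ ∈ (0,1)`, then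
`x̂` must be a critical point: `∇f(x̂) = 0`. -/
theorem stmt_7 {E : Type*} [NormedAddCommGroup E] [InnerProductSpace ℝ E]
    [FiniteDimensional ℝ E]
    (f : E → ℝ) (hf : ContDiff ℝ 1 f)
    (γ μ : ℝ) (hγ0 : 0 < γ) (hγ1 : γ < 1) (hμ : 0 < μ) (xhat : E)
    (h : ∀ x : E,
      f xhat ≥ f x + (1 / γ) * ⟪gradient f x, xhat - x⟫ + μ / 2 * ‖xhat - x‖ ^ 2) :
    gradient f xhat = 0 := by
  set g := gradient f xhat with hg
  have hgrad : Continuous (gradient f) :=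
    (InnerProductSpace.toDual ℝ E).symm.continuous.comp (hf.continuous_fderiv one_ne_zero)
  have hline : HasDerivAt (fun t : ℝ => xhat - t • g) (-g) 0 := by
    simpa using ((hasDerivAt_id (0 : ℝ)).smul_const g).const_sub xhat
  have hderiv : HasDerivAt (fun t : ℝ => f (xhat - t • g)) (-‖g‖ ^ 2) 0 := by
    have hfd : HasFDerivAt f (InnerProductSpace.toDual ℝ E g) (xhat - (0 : ℝ) • g) := by
      rw [zero_smul, sub_zero]
      exact ((hf.differentiable one_ne_zero) xhat).hasGradientAt
    simpa [Function.comp_def] using hfd.comp_hasDerivAt (0 : ℝ) hline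
  have hslope := hderiv.tendsto_slope_zero_right
  have hinner : Filter.Tendsto (fun t : ℝ => ⟪gradient f (xhat - t • g), g⟫)
      (nhdsWithin 0 (Set.Ioi 0)) (nhds (‖g‖ ^ 2)) := by
    have hcont : Continuous fun t : ℝ => ⟪gradient f (xhat - t • g), g⟫ :=
      (hgrad.comp (by fun_prop)).inner continuous_const
    have hlim := hcont.tendsto 0
    rw [zero_smul, sub_zero, ← hg, real_inner_self_eq_norm_sq] at hlim
    exact hlim.mono_left nhdsWithin_le_nhds
  have hle : -‖g‖ ^ 2 + 1 / γ * ‖g‖ ^ 2 ≤ 0 := by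
    refine le_of_tendsto (hslope.add (hinner.const_mul (1 / γ))) ?_
    filter_upwards [self_mem_nhdsWithin] with t ht
    have ht : 0 < t := ht
    have hx := h (xhat - t • g)
    rw [sub_sub_cancel, real_inner_smul_right] at hx
    have hsq : 0 ≤ μ / 2 * ‖t • g‖ ^ 2 := by positivity
    simp only [zero_add, zero_smul, sub_zero, smul_eq_mul]
    refine nonpos_of_mul_nonpos_right (a := t) ?_ ht
    rw [mul_add, mul_inv_cancel_left₀ ht.ne']
    linarith
  have hγ : 1 < 1 / γ := (one_lt_div hγ0).2 hγ1
  have hnorm : ‖g‖ ^ 2 = 0 := by nlinarith [sq_nonneg ‖g‖]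
  simpa using hnorm
end

section
/- Let F = f + g where f : E → ℝ is L-smooth and (ρ,L)-curvatured for some ρ ≤ L, and g : E → ℝ is convex. Assume F has a minimizer x*_F and that f is (1,μ)-strongly quasar convex with respect to x*_F for some 0 < μ ≤ L, i.e. f(x*_F) ≥ f(x) + ⟨∇f(x), x*_F − x⟩ + (μ/2)‖x*_F − x‖² for all x. Let 0 < s ≤ 1/L and let (x_n, y_n, z_n) be generated by the proximal Algorithm 2 with z₀ = x₀ and constant parameters α = 1/(1 + √(μs)), β = 1 − √(μs), η = √(s/μ). If ρ ≥ −√(μ/s), then for all n ∈ ℕ, F(x_n) − F(x*_F) ≤ 2(1 − √(μs))ⁿ (F(x₀) − F(x*_F)). -/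
open scoped RealInnerProductSpace

section QuasarConvex

variable {E : Type*} [NormedAddCommGroup E] [InnerProductSpace ℝ E]

theorem nonpos_of_forall_le_mul {a b : ℝ}
    (h : ∀ t : ℝ, 0 < t → t < 1 → a ≤ t * b) : a ≤ 0 := by
  by_contra! ha
  have hb : a < a + |b| + 1 := by linarith [abs_nonneg b]
  have hD : 0 < a + |b| + 1 := ha.trans hb
  have key := h (a / (a + |b| + 1)) (div_pos ha hD) ((div_lt_one hD).2 hb)
  rw [div_mul_eq_mul_div, le_div_iff₀ hD] at key
  nlinarith [le_abs_self b, mul_pos ha ha]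

/-- The variational inequality characterizing the proximal point `p` of `s • g` at `u`. -/
theorem ConvexOn.inner_le_of_prox {g : E → ℝ} (hg : ConvexOn ℝ Set.univ g) {s : ℝ} (hs : 0 < s)
    {u p : E}
    (hp : ∀ w, g p + 1 / (2 * s) * ‖u - p‖ ^ 2 ≤ g w + 1 / (2 * s) * ‖u - w‖ ^ 2) (w : E) :
    ⟪u - p, w - p⟫ ≤ s * (g w - g p) := by
  suffices h : ⟪u - p, w - p⟫ - s * (g w - g p) ≤ 0 by linarith
  refine nonpos_of_forall_le_mul (b := 1 / 2 * ‖w - p‖ ^ 2) fun t ht0 ht1 => ?_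
  have hc := hg.2 (Set.mem_univ p) (Set.mem_univ w) (by linarith : 0 ≤ 1 - t) ht0.le (by ring)
  have hm := hp ((1 - t) • p + t • w)
  have hn : ‖u - ((1 - t) • p + t • w)‖ ^ 2
      = ‖u - p‖ ^ 2 - 2 * (t * ⟪u - p, w - p⟫) + t ^ 2 * ‖w - p‖ ^ 2 := by
    rw [show u - ((1 - t) • p + t • w) = (u - p) - t • (w - p) by module,
      norm_sub_sq_real, inner_smul_right, norm_smul, mul_pow, Real.norm_eq_abs, sq_abs]
  rw [hn] at hm
  simp only [smul_eq_mul] at hc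
  have h1 : 0 ≤ t * (g w - g p)
      + 1 / (2 * s) * (-(2 * (t * ⟪u - p, w - p⟫)) + t ^ 2 * ‖w - p‖ ^ 2) := by
    linarith
  have h2 : t * (⟪u - p, w - p⟫ - s * (g w - g p)) ≤ t * (t * (1 / 2 * ‖w - p‖ ^ 2)) := by
    have h3 := mul_nonneg hs.le h1
    field_simp at h3
    nlinarith
  exact le_of_mul_le_mul_left h2 ht0

/-- A strongly quasar convex function has difference quotients from its reference point
growing at least linearly along rays. -/
theorem add_mul_le_sub_of_quasarConvex [CompleteSpace E] {f : E → ℝ} (hf : Differentiable ℝ f)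
    {μ : ℝ} {c : E}
    (hqc : ∀ x, f x + ⟪gradient f x, c - x⟫ + μ / 2 * ‖c - x‖ ^ 2 ≤ f c) (d : E)
    {t : ℝ} (ht0 : 0 < t) (ht1 : t ≤ 1) :
    (f (c + t • d) - f c) / t + μ / 2 * ‖d‖ ^ 2 * (1 - t) ≤ f (c + d) - f c := by
  have hφ : ∀ r : ℝ, HasDerivAt (fun r : ℝ => f (c + r • d)) ⟪gradient f (c + r • d), d⟫ r := by
    intro r
    have h1 : HasDerivAt (fun r : ℝ => c + r • d) d r := by
      simpa using ((hasDerivAt_id r).smul_const d).const_add c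
    exact ((hf (c + r • d)).hasFDerivAt.comp_hasDerivAt r h1).congr_deriv (by simp)
  have hψ : ∀ r : ℝ, 0 < r → HasDerivAt
      (fun r : ℝ => (f (c + r • d) - f c) / r - μ / 2 * ‖d‖ ^ 2 * r)
      ((⟪gradient f (c + r • d), d⟫ * r - (f (c + r • d) - f c) * 1) / r ^ 2
        - μ / 2 * ‖d‖ ^ 2 * 1) r := by
    intro r hr
    exact (((hφ r).sub_const _).div (hasDerivAt_id r) hr.ne').sub
      ((hasDerivAt_id r).const_mul _)
  have hmono : MonotoneOn (fun r : ℝ => (f (c + r • d) - f c) / r - μ / 2 * ‖d‖ ^ 2 * r)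
      (Set.Ioi 0) := by
    refine monotoneOn_of_deriv_nonneg (convex_Ioi 0)
      (fun r hr => (hψ r hr).continuousAt.continuousWithinAt)
      (fun r hr => (hψ r (by simpa using hr)).differentiableAt.differentiableWithinAt) ?_
    intro r hr
    have hr : 0 < r := by simpa using hr
    rw [(hψ r hr).deriv, sub_nonneg, le_div_iff₀ (by positivity)]
    have h := hqc (c + r • d)
    rw [show c - (c + r • d) = -(r • d) by abel, inner_neg_right, inner_smul_right, norm_neg,
      norm_smul, mul_pow, Real.norm_eq_abs, sq_abs] at h
    linarith
  have h := hmono (Set.mem_Ioi.2 ht0) (Set.mem_Ioi.2 one_pos) ht1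
  simp only [one_smul, div_one, mul_one] at h
  linarith

/-- Quadratic growth of `f + g` around a minimizer with respect to which `f` is strongly
quasar convex. -/
theorem quadratic_growth_of_quasarConvex [CompleteSpace E] {f g : E → ℝ}
    (hf : Differentiable ℝ f) (hg : ConvexOn ℝ Set.univ g) {μ : ℝ} {c : E}
    (hmin : ∀ x, f c + g c ≤ f x + g x)
    (hqc : ∀ x, f x + ⟪gradient f x, c - x⟫ + μ / 2 * ‖c - x‖ ^ 2 ≤ f c) (x : E) :
    μ / 2 * ‖x - c‖ ^ 2 ≤ (f x + g x) - (f c + g c) := by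
  suffices h : μ / 2 * ‖x - c‖ ^ 2 - ((f x + g x) - (f c + g c)) ≤ 0 by linarith
  refine nonpos_of_forall_le_mul (b := μ / 2 * ‖x - c‖ ^ 2) fun t ht0 ht1 => ?_
  have h1 := add_mul_le_sub_of_quasarConvex hf hqc (x - c) ht0 ht1.le
  have h2 := hg.2 (Set.mem_univ c) (Set.mem_univ x) (by linarith : 0 ≤ 1 - t) ht0.le (by ring)
  rw [show (1 - t) • c + t • x = c + t • (x - c) by module] at h2
  simp only [smul_eq_mul] at h2
  have h3 : -(g x - g c) ≤ (f (c + t • (x - c)) - f c) / t := by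
    rw [le_div_iff₀ ht0]
    linarith [hmin (c + t • (x - c))]
  rw [add_sub_cancel] at h1
  linarith

/-- The basic inequality for a proximal gradient step `y ↦ p`, multiplied by the stepsize. -/
theorem prox_gradient_step_le {f g : E → ℝ} (hg : ConvexOn ℝ Set.univ g) {L s : ℝ}
    (hs : 0 < s) (hLs : L * s ≤ 1) {y p v : E}
    (hdesc : f p ≤ f y + ⟪v, p - y⟫ + L / 2 * ‖y - p‖ ^ 2)
    (hp : ∀ w, g p + 1 / (2 * s) * ‖y - s • v - p‖ ^ 2
      ≤ g w + 1 / (2 * s) * ‖y - s • v - w‖ ^ 2) (w : E) :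
    s * (f p + g p) ≤ s * (f y + ⟪v, w - y⟫ + g w) - ⟪y - p, w - y⟫ - 1 / 2 * ‖y - p‖ ^ 2 := by
  have h := hg.inner_le_of_prox hs hp w
  have hi : ⟪y - s • v - p, w - p⟫
      = ⟪y - p, w - y⟫ + ‖y - p‖ ^ 2 - s * ⟪v, w - y⟫ + s * ⟪v, p - y⟫ := by
    rw [← real_inner_self_eq_norm_sq]
    simp only [inner_sub_left, inner_sub_right, real_inner_smul_left]
    ring
  rw [hi] at h
  have h1 := mul_le_mul_of_nonneg_left hdesc hs.le
  have h2 := mul_le_mul_of_nonneg_right hLs (sq_nonneg ‖y - p‖)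
  linarith

/-- The quadratic identity behind the one-step decrease of the Lyapunov function: here
`a = y - c`, `b = z - y`, and `r = y - x⁺`. -/
theorem norm_sq_lyapunov_identity {q : ℝ} (hq : q ≠ 0) (a b r : E) :
    q ^ 2 * ‖a + (1 - q) • b - q⁻¹ • r‖ ^ 2
      = q ^ 2 * ((1 - q) * ‖a + b‖ ^ 2 + q * ‖a‖ ^ 2 - q * (1 - q) * ‖b‖ ^ 2)
        - 2 * q * ⟪r, a⟫ - 2 * q * (1 - q) * ⟪r, b⟫ + ‖r‖ ^ 2 := by
  simp only [← real_inner_self_eq_norm_sq, inner_sub_left, inner_sub_right, inner_add_left,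
    inner_add_right, real_inner_smul_left, real_inner_smul_right, real_inner_comm r,
    real_inner_comm a b]
  field_simp
  ring

end QuasarConvex

/-- accelerated linear convergence of the proximal Nesterov
accelerated gradient algorithm (Algorithm 2) for composite functions
`F = f + g` with `f` `L`-smooth, `(ρ,L)`-curvatured and `(1,μ)`-strongly quasar
convex with respect to a minimizer of `F`, and `g` convex, provided
`ρ ≥ -√(μ/s)`.  Here `prox` is the proximal operator of `sg`. -/
theorem stmt_8 {E : Type*} [NormedAddCommGroup E] [InnerProductSpace ℝ E]
    [FiniteDimensional ℝ E]
    (f g : E → ℝ) (hf : Differentiable ℝ f)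
    (L μ ρ s : ℝ) (hμ : 0 < μ) (hμL : μ ≤ L) (hρL : ρ ≤ L)
    (hLip : ∀ x y : E, ‖gradient f x - gradient f y‖ ≤ L * ‖x - y‖)
    (hcurv : ∀ x y : E,
      f x + ⟪gradient f x, y - x⟫ + ρ / 2 * ‖x - y‖ ^ 2 ≤ f y ∧
      f y ≤ f x + ⟪gradient f x, y - x⟫ + L / 2 * ‖x - y‖ ^ 2)
    (hg : ConvexOn ℝ Set.univ g)
    (xstarF : E) (hmin : ∀ x : E, f xstarF + g xstarF ≤ f x + g x)
    (hqc : ∀ x : E,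
      f xstarF ≥ f x + ⟪gradient f x, xstarF - x⟫ + μ / 2 * ‖xstarF - x‖ ^ 2)
    (hs0 : 0 < s) (hs1 : s ≤ 1 / L)
    (hρ : ρ ≥ -Real.sqrt (μ / s))
    (prox : E → E)
    (hproxmin : ∀ u w : E,
      g (prox u) + 1 / (2 * s) * ‖u - prox u‖ ^ 2 ≤ g w + 1 / (2 * s) * ‖u - w‖ ^ 2)
    (hproxuniq : ∀ u w : E,
      (∀ w' : E, g w + 1 / (2 * s) * ‖u - w‖ ^ 2 ≤ g w' + 1 / (2 * s) * ‖u - w'‖ ^ 2) →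
      w = prox u)
    (x y z : ℕ → E) (hz0 : z 0 = x 0)
    (hy : ∀ n : ℕ, y n = (1 / (1 + Real.sqrt (μ * s))) • x n
      + (1 - 1 / (1 + Real.sqrt (μ * s))) • z n)
    (hx : ∀ n : ℕ, x (n + 1) = prox (y n - s • gradient f (y n)))
    (hz : ∀ n : ℕ, z (n + 1) = (1 - Real.sqrt (μ * s)) • z n
      + (Real.sqrt (μ * s)) • y n
      - (Real.sqrt (s / μ) / s) • (y n - prox (y n - s • gradient f (y n)))) :
    ∀ n : ℕ, (f (x n) + g (x n)) - (f xstarF + g xstarF)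
      ≤ 2 * (1 - Real.sqrt (μ * s)) ^ n * ((f (x 0) + g (x 0)) - (f xstarF + g xstarF)) := by
  set q := Real.sqrt (μ * s) with hqdef
  have hL : 0 < L := hμ.trans_le hμL
  have hLs : L * s ≤ 1 := by
    rw [le_div_iff₀ hL] at hs1
    linarith
  have hq0 : 0 < q := Real.sqrt_pos.2 (mul_pos hμ hs0)
  have hqq : q ^ 2 = μ * s := Real.sq_sqrt (mul_pos hμ hs0).le
  have hq1 : q ≤ 1 := by nlinarith
  have hηs : Real.sqrt (s / μ) / s = q⁻¹ := by
    have h : Real.sqrt (s / μ) = s / q := by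
      rw [Real.sqrt_eq_iff_mul_self_eq_of_pos (by positivity), div_mul_div_comm, ← sq q, hqq]
      field_simp
    rw [h]
    field_simp
  have hρq : 0 ≤ μ + ρ * q := by
    have h : Real.sqrt (μ / s) * q = μ := by
      rw [hqdef, ← Real.sqrt_mul (by positivity), show μ / s * (μ * s) = μ ^ 2 by field_simp,
        Real.sqrt_sq hμ.le]
    nlinarith
  have hstep : ∀ n, (f (x (n + 1)) + g (x (n + 1))) - (f xstarF + g xstarF)
      + μ / 2 * ‖z (n + 1) - xstarF‖ ^ 2
      ≤ (1 - q) * ((f (x n) + g (x n)) - (f xstarF + g xstarF)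
        + μ / 2 * ‖z n - xstarF‖ ^ 2) := by
    intro n
    have hdesc := (hcurv (y n) (x (n + 1))).2
    have hprox := fun w => hproxmin (y n - s • gradient f (y n)) w
    rw [← hx n] at hprox
    have hxy : x n - y n = -(q • (z n - y n)) := by
      have h1 : (1 + q) • y n = x n + q • z n := by
        rw [hy n, smul_add, smul_smul, smul_smul]
        congr 1
        · rw [mul_one_div_cancel (by positivity), one_smul]
        · congr 1
          field_simp
          ring
      rw [eq_sub_of_add_eq h1.symm]
      module
    have hzn : z (n + 1) - xstarF
        = (y n - xstarF) + (1 - q) • (z n - y n) - q⁻¹ • (y n - x (n + 1)) := by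
      rw [hz n, ← hx n, hηs]
      module
    have hcur := (hcurv (y n) (x n)).1
    have hqcy := hqc (y n)
    have hstar := prox_gradient_step_le hg hs0 hLs hdesc hprox xstarF
    have hprev := prox_gradient_step_le hg hs0 hLs hdesc hprox (x n)
    have hid := norm_sq_lyapunov_identity hq0.ne' (y n - xstarF) (z n - y n) (y n - x (n + 1))
    rw [← hzn, show y n - xstarF + (z n - y n) = z n - xstarF by abel] at hid
    rw [norm_sub_rev (y n) (x n), hxy, norm_neg, norm_smul, mul_pow, Real.norm_eq_abs,
      sq_abs] at hcur
    rw [hxy] at hprev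
    rw [inner_neg_right (y n - x (n + 1)), inner_smul_right] at hprev
    rw [norm_sub_rev] at hqcy
    rw [← neg_sub (y n) xstarF, inner_neg_right (y n - x (n + 1))] at hstar
    rw [← neg_sub (y n) xstarF] at hqcy
    rw [hqq] at hid
    have hq1' : 0 ≤ 1 - q := by linarith
    have hstar_w := mul_le_mul_of_nonneg_left hstar hq0.le
    have hprev_w := mul_le_mul_of_nonneg_left hprev hq1'
    have hqcy_w := mul_le_mul_of_nonneg_left hqcy (mul_pos hq0 hs0).le
    have hcur_w := mul_le_mul_of_nonneg_left hcur (mul_nonneg hq1' hs0.le)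
    have hrest : 0 ≤ (1 - q) * (q * s) * (μ + ρ * q) * ‖z n - y n‖ ^ 2 := by positivity
    refine le_of_mul_le_mul_left ?_ hs0
    linarith
  have hlyap : ∀ n, (f (x n) + g (x n)) - (f xstarF + g xstarF) + μ / 2 * ‖z n - xstarF‖ ^ 2
      ≤ (1 - q) ^ n * ((f (x 0) + g (x 0)) - (f xstarF + g xstarF)
        + μ / 2 * ‖z 0 - xstarF‖ ^ 2) := by
    intro n
    induction n with
    | zero => simp
    | succ n ih =>
      calc _ ≤ _ := hstep n
        _ ≤ _ := mul_le_mul_of_nonneg_left ih (by linarith)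
        _ = _ := by ring
  intro n
  have hgrow := quadratic_growth_of_quasarConvex hf hg hmin hqc (x 0)
  have hfin := hlyap n
  rw [hz0] at hfin
  have hpow := mul_le_mul_of_nonneg_left hgrow (pow_nonneg (by linarith : 0 ≤ 1 - q) n)
  have hnn : 0 ≤ μ / 2 * ‖z n - xstarF‖ ^ 2 := by positivity
  linarith
end

section
/- Let F : E → ℝ be twice continuously differentiable, L-smooth and (γ,μ)-strongly quasar convex with respect to its minimizer x* for some 0 < μ ≤ L and γ ∈ (0,1]. Let 0 < s ≤ 1/L and let X : [0,∞) → E be twice differentiable, solving for all t ≥ 0 the high-resolution ODE (1 + ((1−γ)/2)√(μs)) X''(t) + (1+γ)√μ X'(t) + √s ∇²F(X(t))·X'(t) + (1 + γ√(μs)) ∇F(X(t)) = 0, with X(0) = X₀ and X'(0) = 0. Then for all t ≥ 0, F(X(t)) − F(x*) ≤ (7/γ)(F(X₀) − F(x*)) · exp(−γ(√μ/2) t). -/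
open scoped RealInnerProductSpace

section QuasarConvex

variable {E : Type*} [NormedAddCommGroup E] [InnerProductSpace ℝ E]

/-- Dissipation inequality for the energy `α f + ‖m v + r g + a y‖² / 2`, with
`m = 1 + (1 - γ) / 2 * (a r)` and `α = (1 + γ a r) m + γ a r`. -/
lemma energy_dissipation (v g y : E) {f a r γ m : ℝ} (ha : 0 < a) (hr : 0 < r)
    (hq : a * r ≤ 1) (hγ0 : 0 < γ) (hγ1 : γ ≤ 1) (hm : m = 1 + (1 - γ) / 2 * (a * r))
    (hf : 0 ≤ f) (hgy : γ * (f + a ^ 2 / 2 * ‖y‖ ^ 2) ≤ ⟪g, y⟫) :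
    ((1 + γ * (a * r)) * m + γ * (a * r)) * ⟪g, v⟫
      + ⟪m • v + r • g + a • y, -((γ * a) • v) - (1 + γ * (a * r)) • g⟫
    ≤ -(γ * a / 2) * (((1 + γ * (a * r)) * m + γ * (a * r)) * f
        + 1 / 2 * ‖m • v + r • g + a • y‖ ^ 2) := by
  have hq0 : 0 < a * r := mul_pos ha hr
  have hγa : 0 < γ * a := mul_pos hγ0 ha
  have hu0 : 0 < γ * (a * r) := mul_pos hγ0 hq0
  have hu1 : γ * (a * r) ≤ 1 := by nlinarith
  have hm1 : 1 ≤ m := by rw [hm]; nlinarith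
  have hm2 : m ≤ 3 / 2 := by rw [hm]; nlinarith
  have hum : (1 + γ * (a * r)) * (m - 1) ≤ 1 := by nlinarith
  have hsq1 := mul_nonneg hγa.le (sq_nonneg ‖a • y + (2 - m) • v - r • g‖)
  have hsq2 := mul_nonneg (mul_nonneg hγa.le (sub_nonneg.2 hm1)) (sq_nonneg ‖v - r • g‖)
  have hV := mul_nonneg (mul_nonneg hγa.le
    (by nlinarith : 0 ≤ 2 * m - 1 - m ^ 2 / 2 - (m - 1) / 2)) (sq_nonneg ‖v‖)
  have hG : 0 ≤ r * (1 + γ * (a * r) / 2 - γ * (a * r) * ((m - 1) / 2)) * ‖g‖ ^ 2 :=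
    mul_nonneg (mul_nonneg hr.le (by nlinarith)) (sq_nonneg _)
  have hY := mul_nonneg (mul_nonneg hγa.le hu0.le) (mul_nonneg (sq_nonneg a) (sq_nonneg ‖y‖))
  have hA := mul_nonneg (mul_nonneg hγa.le
    (by nlinarith : 0 ≤ 1 + γ * (a * r) - ((1 + γ * (a * r)) * m + γ * (a * r)) / 2)) hf
  have hB := mul_nonneg (mul_nonneg (by linarith : 0 ≤ 1 + γ * (a * r)) ha.le)
    (sub_nonneg.2 hgy)
  simp only [← real_inner_self_eq_norm_sq, inner_add_left, inner_add_right, inner_sub_left,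
    inner_sub_right, inner_neg_right, real_inner_smul_left, real_inner_smul_right,
    real_inner_comm g v, real_inner_comm y v, real_inner_comm g y] at *
  simp only [real_inner_comm v g, real_inner_comm v y, real_inner_comm y g] at *
  linarith

variable [CompleteSpace E] {F : E → ℝ}

lemma hasDerivAt_comp_gradient (hF : Differentiable ℝ F) {X : ℝ → E} {v : E} {t : ℝ}
    (hX : HasDerivAt X v t) :
    HasDerivAt (fun τ => F (X τ)) ⟪gradient F (X t), v⟫ t :=
  (hF (X t)).hasGradientAt.hasFDerivAt.comp_hasDerivAt t hX

lemma ContDiff.differentiable_gradient (hF : ContDiff ℝ 2 F) :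
    Differentiable ℝ (gradient F) := by
  have h : Differentiable ℝ (fderiv ℝ F) :=
    (hF.fderiv_right (m := 1) (by norm_num)).differentiable (by norm_num)
  exact (InnerProductSpace.toDual ℝ E).symm.differentiable.comp h

/-- An affine upper bound on the slope along a ray integrates to a quadratic upper bound. -/
lemma sub_le_of_slope_le (hF : Differentiable ℝ F) (x d : E) {b c T : ℝ} (hT : 0 ≤ T)
    (h : ∀ τ, 0 < τ → ⟪gradient F (x + τ • d), d⟫ ≤ b + c * τ) :
    F (x + T • d) - F x ≤ b * T + c / 2 * T ^ 2 := by
  have hline (τ : ℝ) : HasDerivAt (fun τ : ℝ => x + τ • d) d τ := by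
    simpa using ((hasDerivAt_id τ).smul_const d).const_add x
  have hder (τ : ℝ) : HasDerivAt (fun τ => F (x + τ • d) - (b * τ + c / 2 * τ ^ 2))
      (⟪gradient F (x + τ • d), d⟫ - (b + c * τ)) τ := by
    refine ((hasDerivAt_comp_gradient hF (hline τ)).sub
      (((hasDerivAt_id τ).const_mul b).add
        (((hasDerivAt_id τ).pow 2).const_mul (c / 2)))).congr_deriv ?_
    simp only [id, Nat.cast_ofNat, Nat.add_one_sub_one, pow_one]
    ring
  have hanti : AntitoneOn (fun τ => F (x + τ • d) - (b * τ + c / 2 * τ ^ 2)) (Set.Ici 0) := by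
    apply antitoneOn_of_deriv_nonpos (convex_Ici 0)
    · exact fun τ _ => (hder τ).continuousAt.continuousWithinAt
    · exact fun τ _ => (hder τ).differentiableAt.differentiableWithinAt
    · intro τ hτ
      rw [interior_Ici] at hτ
      rw [(hder τ).deriv]
      linarith [h τ hτ]
  have := hanti (Set.mem_Ici.2 le_rfl) (Set.mem_Ici.2 hT) hT
  simp at this
  linarith

/-- An affine lower bound on the slope along a ray integrates to a quadratic lower bound. -/
lemma le_sub_of_slope_ge (hF : Differentiable ℝ F) (x d : E) {b c T : ℝ} (hT : 0 ≤ T)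
    (h : ∀ τ, 0 < τ → b + c * τ ≤ ⟪gradient F (x + τ • d), d⟫) :
    b * T + c / 2 * T ^ 2 ≤ F (x + T • d) - F x := by
  have hneg (z : E) : gradient (fun y => -F y) z = -gradient F z := by
    simp [gradient, fderiv_fun_neg]
  have := sub_le_of_slope_le (F := fun y => -F y) hF.neg x d (b := -b) (c := -c) hT
    (fun τ hτ => by rw [hneg, inner_neg_left]; linarith [h τ hτ])
  linarith

lemma norm_gradient_sq_le (hF : Differentiable ℝ F) {L : ℝ} (hL : 0 < L)
    (hLip : ∀ x y : E, ‖gradient F x - gradient F y‖ ≤ L * ‖x - y‖)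
    {xstar : E} (hmin : ∀ x : E, F xstar ≤ F x) (x : E) :
    ‖gradient F x‖ ^ 2 ≤ 2 * L * (F x - F xstar) := by
  set g := gradient F x with hg
  have hT : 0 < L⁻¹ := inv_pos.2 hL
  have h := sub_le_of_slope_le hF x (-g) (b := -‖g‖ ^ 2) (c := L * ‖g‖ ^ 2) hT.le ?_
  · have h' := hmin (x + L⁻¹ • -g)
    have e : -‖g‖ ^ 2 * L⁻¹ + L * ‖g‖ ^ 2 / 2 * L⁻¹ ^ 2 = -(‖g‖ ^ 2 / (2 * L)) := by
      field_simp
      ring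
    have h2 : ‖g‖ ^ 2 / (2 * L) ≤ F x - F xstar := by linarith
    rw [div_le_iff₀ (by positivity)] at h2
    linarith
  · intro τ hτ
    have h1 := hLip (x + τ • -g) x
    rw [add_sub_cancel_left, norm_smul, norm_neg, Real.norm_of_nonneg hτ.le, ← hg] at h1
    have h2 := real_inner_le_norm (gradient F (x + τ • -g) - g) (-g)
    rw [inner_sub_left, inner_neg_right g, real_inner_self_eq_norm_sq, norm_neg] at h2
    have h3 := mul_le_mul_of_nonneg_right h1 (norm_nonneg g)
    linarith

lemma quadratic_growth (hF : Differentiable ℝ F) {μ γ : ℝ} (hγ0 : 0 < γ)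
    {xstar : E} (hmin : ∀ x : E, F xstar ≤ F x)
    (hqc : ∀ x : E, γ * (F x - F xstar + μ / 2 * ‖x - xstar‖ ^ 2)
      ≤ ⟪gradient F x, x - xstar⟫) (x : E) :
    γ * μ / 4 * ‖x - xstar‖ ^ 2 ≤ F x - F xstar := by
  have h := le_sub_of_slope_ge hF xstar (x - xstar) (b := 0)
    (c := γ * μ / 2 * ‖x - xstar‖ ^ 2) (T := 1) zero_le_one ?_
  · simp only [one_smul, add_sub_cancel] at h
    linarith
  · intro τ hτ
    have h := hqc (xstar + τ • (x - xstar))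
    rw [add_sub_cancel_left, real_inner_smul_right, norm_smul, Real.norm_of_nonneg hτ.le] at h
    have h0 := mul_nonneg hγ0.le (sub_nonneg.2 (hmin (xstar + τ • (x - xstar))))
    refine le_of_mul_le_mul_left ?_ hτ
    linarith

end QuasarConvex

/-- exponential convergence of the values along the solution of the
high resolution ODE
`(1 + ((1-γ)/2)√(μs)) X'' + (1+γ)√μ X' + √s ∇²F(X)·X' + (1+γ√(μs)) ∇F(X) = 0`
for `L`-smooth, `(γ,μ)`-strongly quasar convex `C²` functions.  The Hessian of
`F` at `x` applied to `v` is formalized as `fderiv ℝ (gradient F) x v`. -/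
theorem stmt_9 {E : Type*} [NormedAddCommGroup E] [InnerProductSpace ℝ E]
    [FiniteDimensional ℝ E]
    (F : E → ℝ) (hF : ContDiff ℝ 2 F)
    (L μ γ s : ℝ) (hμ : 0 < μ) (hμL : μ ≤ L) (hγ0 : 0 < γ) (hγ1 : γ ≤ 1)
    (hLip : ∀ x y : E, ‖gradient F x - gradient F y‖ ≤ L * ‖x - y‖)
    (xstar : E) (hmin : ∀ x : E, F xstar ≤ F x)
    (hqc : ∀ x : E,
      F xstar ≥ F x + (1 / γ) * ⟪gradient F x, xstar - x⟫ + μ / 2 * ‖xstar - x‖ ^ 2)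
    (hs0 : 0 < s) (hs1 : s ≤ 1 / L)
    (X X' X'' : ℝ → E)
    (hX : ∀ t : ℝ, HasDerivAt X (X' t) t)
    (hX' : ∀ t : ℝ, HasDerivAt X' (X'' t) t)
    (hode : ∀ t : ℝ, 0 ≤ t →
      (1 + (1 - γ) / 2 * Real.sqrt (μ * s)) • X'' t
        + ((1 + γ) * Real.sqrt μ) • X' t
        + Real.sqrt s • (fderiv ℝ (gradient F) (X t) (X' t))
        + (1 + γ * Real.sqrt (μ * s)) • gradient F (X t) = 0)
    (hX0 : X' 0 = 0) :
    ∀ t : ℝ, 0 ≤ t →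
      F (X t) - F xstar
        ≤ 7 / γ * (F (X 0) - F xstar) * Real.exp (-γ * (Real.sqrt μ / 2) * t) := by
  intro t ht
  have hFd : Differentiable ℝ F := hF.differentiable (by norm_num)
  have hL : 0 < L := hμ.trans_le hμL
  rw [Real.sqrt_mul hμ.le] at hode
  set a := √μ with ha_def
  set r := √s with hr_def
  have ha : 0 < a := Real.sqrt_pos.2 hμ
  have hr : 0 < r := Real.sqrt_pos.2 hs0
  have ha2 : a ^ 2 = μ := Real.sq_sqrt hμ.le
  have hr2 : r ^ 2 = s := Real.sq_sqrt hs0.le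
  have hsL : s * L ≤ 1 := (le_div_iff₀ hL).1 hs1
  have hq : a * r ≤ 1 := by
    have : (a * r) ^ 2 ≤ 1 := by
      rw [mul_pow, ha2, hr2]
      nlinarith
    exact (sq_le_one_iff₀ (by positivity)).1 this
  have hqc' (x : E) : γ * (F x - F xstar + μ / 2 * ‖x - xstar‖ ^ 2)
      ≤ ⟪gradient F x, x - xstar⟫ := by
    have h := hqc x
    rw [← neg_sub x xstar, inner_neg_right, norm_neg, mul_neg, one_div_mul_eq_div] at h
    have h2 : F x - F xstar + μ / 2 * ‖x - xstar‖ ^ 2 ≤ ⟪gradient F x, x - xstar⟫ / γ := by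
      linarith
    rw [le_div_iff₀ hγ0] at h2
    linarith
  set m := 1 + (1 - γ) / 2 * (a * r) with hm
  set α := (1 + γ * (a * r)) * m + γ * (a * r) with hα
  have hα1 : 1 ≤ α := by
    have hq0 : 0 < a * r := mul_pos ha hr
    have hu : 0 < γ * (a * r) := mul_pos hγ0 hq0
    have hm1 : 1 ≤ m := by rw [hm]; nlinarith
    nlinarith
  let Z : ℝ → E := fun τ => m • X' τ + r • gradient F (X τ) + a • (X τ - xstar)
  let V : ℝ → ℝ := fun τ => α * (F (X τ) - F xstar) + 1 / 2 * ‖Z τ‖ ^ 2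
  let V' : ℝ → ℝ := fun τ => α * ⟪gradient F (X τ), X' τ⟫
    + ⟪Z τ, m • X'' τ + r • fderiv ℝ (gradient F) (X τ) (X' τ) + a • X' τ⟫
  have hV (τ : ℝ) : HasDerivAt V (V' τ) τ := by
    have hZ : HasDerivAt Z
        (m • X'' τ + r • fderiv ℝ (gradient F) (X τ) (X' τ) + a • X' τ) τ :=
      (((hX' τ).const_smul m).add
        (((hF.differentiable_gradient (X τ)).hasFDerivAt.comp_hasDerivAt τ
          (hX τ)).const_smul r)).add (((hX τ).sub_const xstar).const_smul a)
    refine ((((hasDerivAt_comp_gradient hFd (hX τ)).sub_const (F xstar)).const_mul α).add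
      (hZ.norm_sq.const_mul (1 / 2))).congr_deriv ?_
    simp only [V']
    ring
  have hdecay (τ : ℝ) (hτ : 0 ≤ τ) : V' τ ≤ -(γ * a / 2) * V τ := by
    have hZ' : m • X'' τ + r • fderiv ℝ (gradient F) (X τ) (X' τ) + a • X' τ
        = -((γ * a) • X' τ) - (1 + γ * (a * r)) • gradient F (X τ) := by
      rw [← sub_eq_zero, ← hode τ hτ]
      module
    have h := energy_dissipation (X' τ) (gradient F (X τ)) (X τ - xstar) ha hr hq hγ0 hγ1 hm
      (sub_nonneg.2 (hmin (X τ))) (by rw [ha2]; exact hqc' (X τ))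
    simp only [V', V, hZ']
    exact h
  have hder (τ : ℝ) : HasDerivAt (fun τ => V τ * Real.exp (γ * a / 2 * τ))
      ((V' τ + γ * a / 2 * V τ) * Real.exp (γ * a / 2 * τ)) τ := by
    refine ((hV τ).mul (((hasDerivAt_id τ).const_mul (γ * a / 2)).exp)).congr_deriv ?_
    simp only [id]
    ring
  have hanti : AntitoneOn (fun τ => V τ * Real.exp (γ * a / 2 * τ)) (Set.Ici 0) := by
    apply antitoneOn_of_deriv_nonpos (convex_Ici 0)
    · exact fun τ _ => (hder τ).continuousAt.continuousWithinAt
    · exact fun τ _ => (hder τ).differentiableAt.differentiableWithinAt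
    · intro τ hτ
      rw [interior_Ici] at hτ
      rw [(hder τ).deriv]
      exact mul_nonpos_of_nonpos_of_nonneg (by linarith [hdecay τ (le_of_lt hτ)])
        (Real.exp_pos _).le
  have hVt : V t * Real.exp (γ * a / 2 * t) ≤ V 0 := by
    simpa using hanti (Set.mem_Ici.2 le_rfl) (Set.mem_Ici.2 ht) ht
  have hf0 : 0 ≤ F (X 0) - F xstar := sub_nonneg.2 (hmin _)
  have hV0 : V 0 ≤ α * (7 / γ * (F (X 0) - F xstar)) := by
    have hg : (r * ‖gradient F (X 0)‖) ^ 2 ≤ 2 * (F (X 0) - F xstar) := by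
      have h := mul_le_mul_of_nonneg_left (norm_gradient_sq_le hFd hL hLip hmin (X 0)) hs0.le
      have h2 := mul_le_mul_of_nonneg_right hsL hf0
      rw [mul_pow, hr2]
      linarith
    have hy : (a * ‖X 0 - xstar‖) ^ 2 ≤ 4 / γ * (F (X 0) - F xstar) := by
      have h := quadratic_growth hFd hγ0 hmin hqc' (X 0)
      rw [mul_pow, ha2, div_mul_eq_mul_div, le_div_iff₀ hγ0]
      linarith
    have hZ0 : ‖Z 0‖ ≤ r * ‖gradient F (X 0)‖ + a * ‖X 0 - xstar‖ := by
      simp only [Z, hX0, smul_zero, zero_add]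
      refine (norm_add_le _ _).trans_eq ?_
      rw [norm_smul, norm_smul, Real.norm_of_nonneg hr.le, Real.norm_of_nonneg ha.le]
    have hZ2 := pow_le_pow_left₀ (norm_nonneg _) hZ0 2
    have hγi : 1 ≤ 1 / γ := (one_le_div hγ0).2 hγ1
    have hsum : V 0 ≤ α * (F (X 0) - F xstar) + (2 + 4 / γ) * (F (X 0) - F xstar) := by
      simp only [V]
      nlinarith [sq_nonneg (r * ‖gradient F (X 0)‖ - a * ‖X 0 - xstar‖)]
    refine hsum.trans ?_
    have e4 : 4 / γ = 4 * (1 / γ) := by ring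
    have e7 : 7 / γ = 7 * (1 / γ) := by ring
    have hcoef : α + (2 + 4 / γ) ≤ α * (7 / γ) := by
      rw [e4, e7]
      nlinarith [mul_nonneg (sub_nonneg.2 hα1) (sub_nonneg.2 hγi)]
    have := mul_le_mul_of_nonneg_right hcoef hf0
    linarith
  have hft : α * (F (X t) - F xstar) ≤ V t := by
    simp only [V]
    linarith [sq_nonneg ‖Z t‖]
  have hexp : Real.exp (γ * a / 2 * t) * Real.exp (-γ * (a / 2) * t) = 1 := by
    rw [← Real.exp_add, Real.exp_eq_one_iff]
    ring
  refine le_of_mul_le_mul_left ?_ (zero_lt_one.trans_le hα1)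
  calc α * (F (X t) - F xstar) ≤ V t := hft
    _ = V t * Real.exp (γ * a / 2 * t) * Real.exp (-γ * (a / 2) * t) := by
      rw [mul_assoc, hexp, mul_one]
    _ ≤ α * (7 / γ * (F (X 0) - F xstar)) * Real.exp (-γ * (a / 2) * t) :=
      mul_le_mul_of_nonneg_right (hVt.trans hV0) (Real.exp_pos _).le
    _ = _ := by ring
end

section
/- Let F : E → ℝ be L-smooth and μ-Polyak-Łojasiewicz for some 0 < μ ≤ L, with a unique minimizer x*. Assume F satisfies the uniform acute angle condition with constant a ∈ (0,1]: for all x ≠ x*, ⟨∇F(x), x − x*⟩ ≥ a‖∇F(x)‖·‖x − x*‖. Then for every γ with 0 < γ < 2μa/L, the function F is (γ, μa/γ − L/2)-strongly quasar convex with respect to x*. -/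
open scoped RealInnerProductSpace

/-- One-sided slope bound: if `g` decreases from `y` at rate at most `c`, then every directional
derivative at `y` is at least `-c` times the norm of the direction. -/
lemma neg_mul_norm_le_of_hasFDerivAt {E : Type*} [NormedAddCommGroup E] [NormedSpace ℝ E]
    {g : E → ℝ} {g' : E →L[ℝ] ℝ} {y : E} {c : ℝ} (hg : HasFDerivAt g g' y)
    (hc : ∀ z, g y ≤ g z + c * ‖z - y‖) (w : E) : -(c * ‖w‖) ≤ g' w := by
  have hline : HasDerivAt (fun s : ℝ => y + s • w) w 0 := by
    simpa using ((hasDerivAt_id (0 : ℝ)).smul_const w).const_add y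
  have hcomp : HasDerivAt (fun s : ℝ => g (y + s • w)) (g' w) 0 :=
    HasFDerivAt.comp_hasDerivAt 0 (by simpa using hg) hline
  refine ge_of_tendsto hcomp.tendsto_slope_zero_right ?_
  filter_upwards [self_mem_nhdsWithin] with t ht
  have ht : 0 < t := ht
  have h := hc (y + t • w)
  rw [add_sub_cancel_left, norm_smul, Real.norm_of_nonneg ht.le] at h
  simp only [zero_add, zero_smul, add_zero, smul_eq_mul]
  rw [inv_mul_eq_div, le_div_iff₀ ht]
  linarith

/-- A Polyak-Łojasiewicz function with a unique minimizer has quadratic growth. -/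
lemma quadratic_growth_of_polyak_lojasiewicz {E : Type*} [NormedAddCommGroup E]
    [InnerProductSpace ℝ E] [FiniteDimensional ℝ E] {F : E → ℝ} (hF : Differentiable ℝ F)
    {μ : ℝ} (hμ : 0 < μ) {xstar : E} (hmin : ∀ x : E, F xstar ≤ F x)
    (huniq : ∀ y : E, (∀ x : E, F y ≤ F x) → y = xstar)
    (hPL : ∀ x : E, F x - F xstar ≤ 1 / (2 * μ) * ‖gradient F x‖ ^ 2) (x : E) :
    μ / 2 * ‖x - xstar‖ ^ 2 ≤ F x - F xstar := by
  by_contra! hlt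
  set g : E → ℝ := fun z => √(F z - F xstar) with hg_def
  have hD : 0 < ‖x - xstar‖ := by
    rcases (norm_nonneg (x - xstar)).eq_or_lt with h | h
    · rw [← h] at hlt
      linarith [hmin x]
    · exact h
  have hgx : g x / ‖x - xstar‖ < √(μ / 2) := by
    rw [div_lt_iff₀ hD]
    refine (Real.sqrt_lt_sqrt (by linarith [hmin x]) hlt).trans_eq ?_
    rw [Real.sqrt_mul (by positivity), Real.sqrt_sq hD.le]
  obtain ⟨c, hcl, hcu⟩ := exists_between hgx
  have hc : 0 < c := lt_of_le_of_lt (by positivity) hcl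
  rw [div_lt_iff₀ hD] at hcl
  have hgcont : Continuous g := (hF.continuous.sub continuous_const).sqrt
  -- A minimizer `y` of `g + c ‖· - x‖` differs from `xstar` and has slope at most `c`.
  obtain ⟨y, hy⟩ : ∃ y, ∀ z, g y + c * ‖y - x‖ ≤ g z + c * ‖z - x‖ := by
    refine Continuous.exists_forall_le (f := fun z => g z + c * ‖z - x‖) (by fun_prop) ?_
    refine Filter.tendsto_atTop_mono (f := fun z => c * ‖z - x‖)
      (fun z => le_add_of_nonneg_left (Real.sqrt_nonneg _)) ?_
    refine Filter.Tendsto.const_mul_atTop hc ?_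
    simpa [dist_eq_norm] using tendsto_dist_right_cocompact_atTop x
  have hne : y ≠ xstar := by
    rintro rfl
    have h := hy x
    rw [norm_sub_rev y x, sub_self, norm_zero] at h
    linarith [Real.sqrt_nonneg (F y - F y)]
  have hpos : 0 < F y - F xstar := by
    by_contra! h
    exact hne (huniq y fun z => by linarith [hmin z])
  have hgrad : HasFDerivAt F (innerSL ℝ (gradient F y)) y := (hF y).hasGradientAt.hasFDerivAt
  have hslope := neg_mul_norm_le_of_hasFDerivAt (c := c)
    ((hgrad.sub_const (F xstar)).sqrt hpos.ne')
    (fun z => by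
      have h := hy z
      have htri : ‖z - x‖ ≤ ‖z - y‖ + ‖y - x‖ := norm_sub_le_norm_sub_add_norm_sub z y x
      simp only [hg_def] at h
      nlinarith) (-gradient F y)
  have hr : 0 < √(F y - F xstar) := Real.sqrt_pos.2 hpos
  have hrsq : √(F y - F xstar) ^ 2 = F y - F xstar := Real.sq_sqrt hpos.le
  have hPLy := hPL y
  rw [← hrsq, one_div, inv_mul_eq_div, le_div_iff₀ (by positivity)] at hPLy
  simp only [norm_neg, map_neg, smul_apply, innerSL_apply_apply,
    real_inner_self_eq_norm_sq, smul_eq_mul, neg_le_neg_iff] at hslope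
  rw [one_div, inv_mul_eq_div, div_le_iff₀ (by positivity)] at hslope
  have hG : 0 < ‖gradient F y‖ := by
    refine (norm_nonneg _).lt_of_ne fun h => ?_
    rw [← h] at hPLy
    nlinarith [mul_pos hpos hμ]
  have hG_le : ‖gradient F y‖ ≤ c * (2 * √(F y - F xstar)) := by
    refine le_of_mul_le_mul_right ?_ hG
    linarith
  have hcsq : c ^ 2 < μ / 2 := (Real.lt_sqrt hc.le).1 hcu
  have hsq := pow_le_pow_left₀ hG.le hG_le 2
  have hcr := mul_lt_mul_of_pos_right hcsq (pow_pos hr 2)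
  nlinarith

/-- an `L`-smooth, `μ`-Polyak-Łojasiewicz function with a unique
minimizer satisfying the uniform acute angle condition with constant `a` is
`(γ, μa/γ - L/2)`-strongly quasar convex for every `0 < γ < 2μa/L`. -/
theorem stmt_10 {E : Type*} [NormedAddCommGroup E] [InnerProductSpace ℝ E]
    [FiniteDimensional ℝ E]
    (F : E → ℝ) (hF : Differentiable ℝ F)
    (L μ a : ℝ) (hμ : 0 < μ) (hμL : μ ≤ L) (ha0 : 0 < a) (ha1 : a ≤ 1)
    (hLip : ∀ x y : E, ‖gradient F x - gradient F y‖ ≤ L * ‖x - y‖)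
    (xstar : E) (hmin : ∀ x : E, F xstar ≤ F x)
    (huniq : ∀ y : E, (∀ x : E, F y ≤ F x) → y = xstar)
    (hPL : ∀ x : E, F x - F xstar ≤ 1 / (2 * μ) * ‖gradient F x‖ ^ 2)
    (hUAAC : ∀ x : E, x ≠ xstar →
      ⟪gradient F x, x - xstar⟫ ≥ a * (‖gradient F x‖ * ‖x - xstar‖)) :
    ∀ γ : ℝ, 0 < γ → γ < 2 * μ * a / L →
      ∀ x : E, F xstar ≥ F x + (1 / γ) * ⟪gradient F x, xstar - x⟫
        + (μ * a / γ - L / 2) / 2 * ‖xstar - x‖ ^ 2 := by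
  intro γ hγ hγL x
  have hL : 0 < L := hμ.trans_le hμL
  rcases eq_or_ne x xstar with rfl | hne
  · simp
  have hgrad_min : gradient F xstar = 0 := by
    have h : IsLocalMin F xstar := Filter.Eventually.of_forall hmin
    simp [gradient, h.fderiv_eq_zero]
  have hG_le : ‖gradient F x‖ ≤ L * ‖x - xstar‖ := by
    simpa [hgrad_min] using hLip x xstar
  have hQG := quadratic_growth_of_polyak_lojasiewicz hF hμ hmin huniq hPL x
  have hangle := hUAAC x hne
  have hPLx := hPL x
  rw [norm_sub_rev xstar x, ← neg_sub x xstar, inner_neg_right]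
  generalize ⟪gradient F x, x - xstar⟫ = p at *
  have hG0 := norm_nonneg (gradient F x)
  have hD0 := norm_nonneg (x - xstar)
  generalize ‖gradient F x‖ = G at *
  generalize ‖x - xstar‖ = D at *
  rw [one_div, inv_mul_eq_div, le_div_iff₀ (by positivity)] at hPLx
  have hG_ge : μ * D ≤ G := by
    refine le_of_sq_le_sq ?_ hG0
    nlinarith
  have ht : L / (2 * μ) ≤ a / γ := by
    rw [lt_div_iff₀ hL] at hγL
    rw [div_le_div_iff₀ (by positivity) hγ]
    linarith
  have hp : a / γ * (G * D) ≤ 1 / γ * p := by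
    rw [div_mul_eq_mul_div, one_div, inv_mul_eq_div]
    gcongr
  have hgap : F x - F xstar ≤ L / (2 * μ) * (G * D) := by
    rw [div_mul_eq_mul_div, le_div_iff₀ (by positivity)]
    nlinarith
  have hcoef : 0 ≤ G * D - μ / 2 * D ^ 2 := by nlinarith [mul_nonneg hμ.le (sq_nonneg D)]
  have hmono := mul_le_mul_of_nonneg_right ht hcoef
  have hcancel : L / (2 * μ) * (μ / 2 * D ^ 2) = L / 4 * D ^ 2 := by
    field_simp
    ring
  have hassoc : μ * a / γ = a / γ * μ := by ring
  rw [hassoc]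
  nlinarith
end

section
/- Let F : E → ℝ be (γ,μ)-strongly quasar convex with respect to its minimizer x*, with γ ∈ (0,1] and μ > 0. Then F is γμ/(2−γ)-RSI: for all x, ⟨∇F(x), x − x*⟩ ≥ (γμ/(2−γ))‖x − x*‖². -/
open scoped RealInnerProductSpace

/-- A nonnegative function on `(0, ∞)` satisfying the differential inequality
`γ g t + (2 - γ) c t² ≤ t g' t` with `γ < 2` is at least `c` at `1`. -/
theorem le_apply_one_of_mul_deriv_ge {g g' : ℝ → ℝ} {γ c : ℝ} (hγ : γ < 2)
    (hg : ∀ t, 0 < t → HasDerivAt g (g' t) t) (hg0 : ∀ t, 0 < t → 0 ≤ g t)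
    (h : ∀ t, 0 < t → γ * g t + (2 - γ) * c * t ^ 2 ≤ t * g' t) : c ≤ g 1 := by
  have hderiv : ∀ t, 0 < t → HasDerivAt (fun s => (g s - c * s ^ 2) * s ^ (-γ))
      (t ^ (-γ - 1) * (t * g' t - (γ * g t + (2 - γ) * c * t ^ 2))) t := by
    intro t ht
    have hpow : t ^ (-γ) = t ^ (-γ - 1) * t := by
      rw [← Real.rpow_add_one ht.ne', sub_add_cancel]
    refine (((hg t ht).sub ((hasDerivAt_pow 2 t).const_mul c)).mul
      (Real.hasDerivAt_rpow_const (p := -γ) (Or.inl ht.ne'))).congr_deriv ?_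
    simp only [Pi.sub_apply, hpow]
    push_cast
    ring
  have hmono : MonotoneOn (fun s => (g s - c * s ^ 2) * s ^ (-γ)) (Set.Ioi 0) := by
    refine monotoneOn_of_deriv_nonneg (convex_Ioi 0)
      (fun t ht => (hderiv t ht).continuousAt.continuousWithinAt) ?_ ?_ <;>
      rw [interior_Ioi] <;> intro t ht
    · exact (hderiv t ht).differentiableAt.differentiableWithinAt
    · rw [(hderiv t ht).deriv]
      exact mul_nonneg (Real.rpow_nonneg (le_of_lt ht) _) (sub_nonneg.2 (h t ht))
  have hbound : ∀ t ∈ Set.Ioo (0 : ℝ) 1, -c * t ^ (2 - γ) ≤ g 1 - c := by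
    rintro t ⟨ht0, ht1⟩
    have hle := hmono (Set.mem_Ioi.2 ht0) (Set.mem_Ioi.2 one_pos) ht1.le
    have hpow : t ^ (2 - γ) = t ^ 2 * t ^ (-γ) := by
      rw [sub_eq_add_neg, Real.rpow_add ht0, Real.rpow_two]
    have hnonneg := mul_nonneg (hg0 t ht0) (Real.rpow_nonneg ht0.le (-γ))
    simp only [Real.one_rpow, one_pow, mul_one] at hle
    rw [hpow]
    linarith
  have hlim : Filter.Tendsto (fun t : ℝ => -c * t ^ (2 - γ)) (nhdsWithin 0 (Set.Ioi 0))
      (nhds 0) := by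
    have hcont : ContinuousAt (fun t : ℝ => -c * t ^ (2 - γ)) 0 :=
      (Real.continuousAt_rpow_const 0 (2 - γ) (Or.inr (by linarith))).const_mul (-c)
    have hlim := hcont.tendsto
    rw [Real.zero_rpow (by linarith), mul_zero] at hlim
    exact hlim.mono_left nhdsWithin_le_nhds
  have hle := le_of_tendsto hlim
    (Filter.eventually_of_mem (Ioo_mem_nhdsGT one_pos) hbound)
  linarith

/-- Strong quasar convexity implies quadratic growth. -/
theorem quadratic_growth_of_strong_quasar_convex {E : Type*} [NormedAddCommGroup E]
    [InnerProductSpace ℝ E] [CompleteSpace E] {F : E → ℝ} (hF : Differentiable ℝ F)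
    {μ γ : ℝ} (hγ0 : 0 < γ) (hγ2 : γ < 2) {xstar : E} (hmin : ∀ x : E, F xstar ≤ F x)
    (hqc : ∀ x : E,
      γ * (F x - F xstar) + γ * μ / 2 * ‖x - xstar‖ ^ 2 ≤ ⟪gradient F x, x - xstar⟫) (x : E) :
    γ * μ / (2 * (2 - γ)) * ‖x - xstar‖ ^ 2 ≤ F x - F xstar := by
  have hne : 2 - γ ≠ 0 := by linarith
  have hderiv : ∀ t : ℝ, 0 < t → HasDerivAt (fun s : ℝ => F (xstar + s • (x - xstar)) - F xstar)
      ⟪gradient F (xstar + t • (x - xstar)), x - xstar⟫ t := by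
    intro t _
    have hline : HasDerivAt (fun s : ℝ => xstar + s • (x - xstar)) (x - xstar) t := by
      simpa using ((hasDerivAt_id t).smul_const (x - xstar)).const_add xstar
    have hcomp := (hF (xstar + t • (x - xstar))).hasGradientAt.hasFDerivAt.comp_hasDerivAt t hline
    simpa using hcomp.sub_const (F xstar)
  have hle := le_apply_one_of_mul_deriv_ge (c := γ * μ / (2 * (2 - γ)) * ‖x - xstar‖ ^ 2)
    hγ2 hderiv (fun t _ => sub_nonneg.2 (hmin _)) (fun t _ => by
      have hq := hqc (xstar + t • (x - xstar))
      rw [add_sub_cancel_left, inner_smul_right, norm_smul, mul_pow, Real.norm_eq_abs,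
        sq_abs] at hq
      refine le_of_eq_of_le ?_ hq
      field_simp)
  simpa using hle

/-- a `(γ,μ)`-strongly quasar convex function is
`γμ/(2-γ)`-RSI with respect to its minimizer. -/
theorem stmt_13 {E : Type*} [NormedAddCommGroup E] [InnerProductSpace ℝ E]
    [FiniteDimensional ℝ E]
    (F : E → ℝ) (hF : Differentiable ℝ F)
    (μ γ : ℝ) (hμ : 0 < μ) (hγ0 : 0 < γ) (hγ1 : γ ≤ 1)
    (xstar : E) (hmin : ∀ x : E, F xstar ≤ F x)
    (hqc : ∀ x : E,
      F xstar ≥ F x + (1 / γ) * ⟪gradient F x, xstar - x⟫ + μ / 2 * ‖xstar - x‖ ^ 2) :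
    ∀ x : E, ⟪gradient F x, x - xstar⟫ ≥ γ * μ / (2 - γ) * ‖x - xstar‖ ^ 2 := by
  have hγ2 : γ < 2 := by linarith
  have hne : 2 - γ ≠ 0 := by linarith
  have hqc' : ∀ x : E,
      γ * (F x - F xstar) + γ * μ / 2 * ‖x - xstar‖ ^ 2 ≤ ⟪gradient F x, x - xstar⟫ := by
    intro x
    have hx := mul_le_mul_of_nonneg_left (hqc x) hγ0.le
    rw [norm_sub_rev, ← neg_sub x xstar, inner_neg_right, mul_add, mul_add, ← mul_assoc,
      mul_one_div_cancel hγ0.ne'] at hx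
    linarith
  intro x
  have hgrowth := mul_le_mul_of_nonneg_left
    (quadratic_growth_of_strong_quasar_convex hF hγ0 hγ2 hmin hqc' x) hγ0.le
  have hsum : γ * μ / (2 - γ) * ‖x - xstar‖ ^ 2 =
      γ * (γ * μ / (2 * (2 - γ)) * ‖x - xstar‖ ^ 2) + γ * μ / 2 * ‖x - xstar‖ ^ 2 := by
    field_simp
    ring
  linarith [hqc' x]
end

section
/- Let F : E → ℝ be L-smooth with minimizer x*, and ν-RSI for some ν > 0: ⟨∇F(x), x − x*⟩ ≥ ν‖x − x*‖² for all x. Then for every γ with 0 < γ < 2ν/L, F is (γ, ν/γ − L/2)-strongly quasar convex with respect to x*. -/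
open scoped RealInnerProductSpace

/-- Descent lemma: a function with `L`-Lipschitz gradient lies below its quadratic upper model. -/
theorem le_add_inner_gradient_add_of_lipschitz {E : Type*} [NormedAddCommGroup E]
    [InnerProductSpace ℝ E] [CompleteSpace E] {F : E → ℝ} (hF : Differentiable ℝ F) {L : ℝ}
    (hLip : ∀ x y : E, ‖gradient F x - gradient F y‖ ≤ L * ‖x - y‖) (x y : E) :
    F y ≤ F x + ⟪gradient F x, y - x⟫ + L / 2 * ‖y - x‖ ^ 2 := by
  set d := y - x with hd
  let g : ℝ → ℝ := fun t => F (x + t • d) - t * ⟪gradient F x, d⟫ - L / 2 * ‖d‖ ^ 2 * t ^ 2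
  have hg : ∀ t, HasDerivAt g
      (⟪gradient F (x + t • d) - gradient F x, d⟫ - L * t * ‖d‖ ^ 2) t := by
    intro t
    have hline : HasDerivAt (fun s : ℝ => x + s • d) d t := by
      simpa using ((hasDerivAt_id t).smul_const d).const_add x
    have hcomp := (hF (x + t • d)).hasGradientAt.hasFDerivAt.comp_hasDerivAt t hline
    have h := (hcomp.sub ((hasDerivAt_id t).mul_const ⟪gradient F x, d⟫)).sub
      ((hasDerivAt_pow 2 t).const_mul (L / 2 * ‖d‖ ^ 2))
    refine h.congr_deriv ?_
    simp only [InnerProductSpace.toDual_apply_apply, inner_sub_left]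
    norm_num
    ring
  have hanti : AntitoneOn g (Set.Icc 0 1) := by
    refine antitoneOn_of_deriv_nonpos (convex_Icc 0 1)
      (fun t _ => (hg t).continuousAt.continuousWithinAt)
      (fun t _ => (hg t).differentiableAt.differentiableWithinAt) fun t ht => ?_
    rw [interior_Icc] at ht
    rw [(hg t).deriv, sub_nonpos]
    calc ⟪gradient F (x + t • d) - gradient F x, d⟫
        ≤ ‖gradient F (x + t • d) - gradient F x‖ * ‖d‖ := real_inner_le_norm _ _
      _ ≤ L * ‖x + t • d - x‖ * ‖d‖ := by gcongr; exact hLip _ _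
      _ = L * t * ‖d‖ ^ 2 := by
        rw [add_sub_cancel_left, norm_smul, Real.norm_of_nonneg ht.1.le]
        ring
  have h := hanti (by simp) (by simp) zero_le_one
  have hxy : x + d = y := by simp [hd]
  simp only [g, one_smul, zero_smul, add_zero, hxy] at h
  linarith

/-- an `L`-smooth, `ν`-RSI function is
`(γ, ν/γ - L/2)`-strongly quasar convex for every `0 < γ < 2ν/L`. -/
theorem stmt_14 {E : Type*} [NormedAddCommGroup E] [InnerProductSpace ℝ E]
    [FiniteDimensional ℝ E]
    (F : E → ℝ) (hF : Differentiable ℝ F)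
    (L ν : ℝ) (hL : 0 < L) (hν : 0 < ν)
    (hLip : ∀ x y : E, ‖gradient F x - gradient F y‖ ≤ L * ‖x - y‖)
    (xstar : E) (hmin : ∀ x : E, F xstar ≤ F x)
    (hRSI : ∀ x : E, ⟪gradient F x, x - xstar⟫ ≥ ν * ‖x - xstar‖ ^ 2) :
    ∀ γ : ℝ, 0 < γ → γ < 2 * ν / L →
      ∀ x : E, F xstar ≥ F x + (1 / γ) * ⟪gradient F x, xstar - x⟫
        + (ν / γ - L / 2) / 2 * ‖xstar - x‖ ^ 2 := by
  intro γ hγ hγL x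
  have hgrad : gradient F xstar = 0 := by
    have hmin_loc : IsLocalMin F xstar := Filter.Eventually.of_forall hmin
    simp [gradient, hmin_loc.fderiv_eq_zero]
  have hdesc := le_add_inner_gradient_add_of_lipschitz hF hLip xstar x
  rw [hgrad, inner_zero_left, add_zero] at hdesc
  have hLγ : L / 2 ≤ ν / γ := by
    rw [lt_div_iff₀ hL] at hγL
    rw [le_div_iff₀ hγ]
    linarith
  have hinner : ν / γ * ‖x - xstar‖ ^ 2 ≤ 1 / γ * ⟪gradient F x, x - xstar⟫ := by
    have h := mul_le_mul_of_nonneg_left (hRSI x) (one_div_pos.2 hγ).le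
    calc ν / γ * ‖x - xstar‖ ^ 2 = 1 / γ * (ν * ‖x - xstar‖ ^ 2) := by ring
      _ ≤ _ := h
  have hsq := mul_le_mul_of_nonneg_right hLγ (sq_nonneg ‖x - xstar‖)
  rw [← neg_sub x xstar, inner_neg_right, norm_neg]
  linarith
end

section
/- Let F : E → ℝ be (γ,μ)-strongly quasar convex with respect to its minimizer x*, with γ ∈ (0,1] and μ > 0. Then F is μγ²-Polyak-Łojasiewicz: for all x, F(x) − F(x*) ≤ (1/(2γ²μ))‖∇F(x)‖². -/
open scoped RealInnerProductSpace

/-- a `(γ,μ)`-strongly quasar convex function is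
`μγ²`-Polyak-Łojasiewicz. -/
theorem stmt_15 {E : Type*} [NormedAddCommGroup E] [InnerProductSpace ℝ E]
    [FiniteDimensional ℝ E]
    (F : E → ℝ) (hF : Differentiable ℝ F)
    (μ γ : ℝ) (hμ : 0 < μ) (hγ0 : 0 < γ) (hγ1 : γ ≤ 1)
    (xstar : E) (hmin : ∀ x : E, F xstar ≤ F x)
    (hqc : ∀ x : E,
      F xstar ≥ F x + (1 / γ) * ⟪gradient F x, xstar - x⟫ + μ / 2 * ‖xstar - x‖ ^ 2) :
    ∀ x : E, F x - F xstar ≤ 1 / (2 * γ ^ 2 * μ) * ‖gradient F x‖ ^ 2 := by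
  intro x
  have hq := hqc x
  have hcs : -(‖gradient F x‖ * ‖xstar - x‖) ≤ ⟪gradient F x, xstar - x⟫ :=
    neg_le_of_abs_le (abs_real_inner_le_norm _ _)
  have hcs' := mul_le_mul_of_nonneg_left hcs (one_div_pos.mpr hγ0).le
  have hsq : 0 ≤ (‖gradient F x‖ / γ - μ * ‖xstar - x‖) ^ 2 / (2 * μ) := by positivity
  have hexp : (‖gradient F x‖ / γ - μ * ‖xstar - x‖) ^ 2 / (2 * μ) =
      1 / (2 * γ ^ 2 * μ) * ‖gradient F x‖ ^ 2 + 1 / γ * -(‖gradient F x‖ * ‖xstar - x‖)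
        + μ / 2 * ‖xstar - x‖ ^ 2 := by
    field_simp
    ring
  linarith
end

section
/- Let F : E → ℝ be twice continuously differentiable and (γ,μ)-strongly quasar convex with respect to its minimizer x*, with γ ∈ (0,1] and μ > 0. Then for every x ≠ x* and every t > 0: (1/t) ∫₀ᵗ ⟨∇²F(x* + s(x − x*))(x* − x), x* − x⟩ / ‖x − x*‖² ds ≥ γμ/2. (On average along segments emanating from the minimizer the Hessian curvature is at least γμ/2.) -/
open scoped RealInnerProductSpace

/-- The gradient of a `C²` function is `C¹`. -/
theorem contDiff_one_gradient {E : Type*} [NormedAddCommGroup E] [InnerProductSpace ℝ E]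
    [CompleteSpace E] {F : E → ℝ} (hF : ContDiff ℝ 2 F) : ContDiff ℝ 1 (gradient F) :=
  (InnerProductSpace.toDual ℝ E).symm.contDiff.comp
    (hF.fderiv_right (m := 1) (by norm_num))

/-- The integral of the second derivative of a `C²` function along a segment is the increment of
the directional derivative. -/
theorem integral_inner_fderiv_gradient {E : Type*} [NormedAddCommGroup E]
    [InnerProductSpace ℝ E] [CompleteSpace E] {F : E → ℝ} (hF : ContDiff ℝ 2 F)
    (a d w : E) (t : ℝ) :
    ∫ u in (0 : ℝ)..t, ⟪fderiv ℝ (gradient F) (a + u • d) d, w⟫ =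
      ⟪gradient F (a + t • d), w⟫ - ⟪gradient F a, w⟫ := by
  have hG := contDiff_one_gradient hF
  have hderiv (u : ℝ) : HasDerivAt (fun u : ℝ => ⟪gradient F (a + u • d), w⟫)
      ⟪fderiv ℝ (gradient F) (a + u • d) d, w⟫ u := by
    have hline : HasDerivAt (fun u : ℝ => a + u • d) d u := by
      simpa using ((hasDerivAt_id u).smul_const d).const_add a
    have hgrad := ((hG.differentiable (by norm_num)) (a + u • d)).hasFDerivAt.comp_hasDerivAt u hline
    simpa using hgrad.inner ℝ (hasDerivAt_const u w)
  have hcont : Continuous fun u : ℝ => ⟪fderiv ℝ (gradient F) (a + u • d) d, w⟫ := by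
    have hline : Continuous fun u : ℝ => a + u • d := by fun_prop
    exact (((hG.continuous_fderiv (by norm_num)).comp hline).clm_apply
      continuous_const).inner continuous_const
  rw [intervalIntegral.integral_eq_sub_of_hasDerivAt (fun u _ => hderiv u)
    (hcont.intervalIntegrable 0 t)]
  simp

/-- The gradient vanishes at a global minimizer. -/
theorem gradient_eq_zero_of_forall_le {E : Type*} [NormedAddCommGroup E]
    [InnerProductSpace ℝ E] [CompleteSpace E] {F : E → ℝ} {a : E} (hmin : ∀ x, F a ≤ F x) :
    gradient F a = 0 := by
  have hloc : IsLocalMin F a := Filter.Eventually.of_forall hmin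
  simp [gradient, hloc.fderiv_eq_zero]

/-- for a `C²` `(γ,μ)`-strongly quasar convex function, the
average curvature of the Hessian along segments emanating from the minimizer is
at least `γμ/2`.  The Hessian of `F` at `y` applied to `v` is formalized as
`fderiv ℝ (gradient F) y v`. -/
theorem stmt_16 {E : Type*} [NormedAddCommGroup E] [InnerProductSpace ℝ E]
    [FiniteDimensional ℝ E]
    (F : E → ℝ) (hF : ContDiff ℝ 2 F)
    (μ γ : ℝ) (hμ : 0 < μ) (hγ0 : 0 < γ) (hγ1 : γ ≤ 1)
    (xstar : E) (hmin : ∀ x : E, F xstar ≤ F x)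
    (hqc : ∀ x : E,
      F xstar ≥ F x + (1 / γ) * ⟪gradient F x, xstar - x⟫ + μ / 2 * ‖xstar - x‖ ^ 2) :
    ∀ x : E, x ≠ xstar → ∀ t : ℝ, 0 < t →
      γ * μ / 2 ≤ (1 / t) * ∫ u in (0 : ℝ)..t,
        ⟪(fderiv ℝ (gradient F) (xstar + u • (x - xstar))) (xstar - x), xstar - x⟫
          / ‖x - xstar‖ ^ 2 := by
  intro x hx t ht
  have hn : 0 < ‖x - xstar‖ ^ 2 := pow_pos (norm_pos_iff.mpr (sub_ne_zero.mpr hx)) 2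
  set d := x - xstar with hd
  have hneg : xstar - x = -d := by simp [hd]
  have hint : ∫ u in (0 : ℝ)..t,
      ⟪(fderiv ℝ (gradient F) (xstar + u • d)) (xstar - x), xstar - x⟫ / ‖d‖ ^ 2 =
        ⟪gradient F (xstar + t • d), d⟫ / ‖d‖ ^ 2 := by
    simp only [hneg, map_neg, inner_neg_neg]
    rw [intervalIntegral.integral_div, integral_inner_fderiv_gradient hF,
      gradient_eq_zero_of_forall_le hmin, inner_zero_left, sub_zero]
  rw [hint]
  set g := ⟪gradient F (xstar + t • d), d⟫ with hg
  have hq := hqc (xstar + t • d)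
  rw [sub_add_cancel_left, inner_neg_right, real_inner_smul_right, norm_neg, norm_smul, mul_pow,
    Real.norm_eq_abs, sq_abs, ← hg] at hq
  have hm := hmin (xstar + t • d)
  have hslope : μ / 2 * (t ^ 2 * ‖d‖ ^ 2) ≤ t * g / γ := by
    have : 1 / γ * -(t * g) = -(t * g / γ) := by ring
    linarith
  rw [le_div_iff₀ hγ0] at hslope
  have hg_lower : γ * μ / 2 * (t * ‖d‖ ^ 2) ≤ g := by
    refine le_of_mul_le_mul_left ?_ ht
    linarith
  have hprod : 1 / t * (g / ‖d‖ ^ 2) = g / (t * ‖d‖ ^ 2) := by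
    rw [div_mul_div_comm, one_mul]
  rwa [hprod, le_div_iff₀ (mul_pos ht hn)]
end

section
/- Let F : E → ℝ be twice continuously differentiable with a unique minimizer x*, and assume F has μ-quadratic growth for some μ > 0: F(x) − F(x*) ≥ (μ/2)‖x − x*‖² for all x. Then ⟨∇²F(x*)v, v⟩ ≥ μ‖v‖² for all v ∈ E, and for every ε ∈ (0,μ) there exists η > 0 such that for all x in the open ball B(x*, η) and all v ∈ E, ⟨∇²F(x)v, v⟩ ≥ (μ − ε)‖v‖²; in particular F is strongly convex on B(x*, η). -/
open scoped RealInnerProductSpace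

section HessianOnLines

variable {E : Type*} [NormedAddCommGroup E] [InnerProductSpace ℝ E]

theorem hasDerivAt_add_smul (x v : E) (t : ℝ) : HasDerivAt (fun s : ℝ => x + s • v) v t := by
  simpa using ((hasDerivAt_id t).smul_const v).const_add x

/-- A lower bound on the quadratic form of an operator degrades by at most the size of a
perturbation of that operator. -/
theorem inner_apply_self_ge_of_norm_sub_le {A B : E →L[ℝ] E} {μ ε : ℝ} (hAB : ‖B - A‖ ≤ ε)
    {v : E} (hA : μ * ‖v‖ ^ 2 ≤ ⟪A v, v⟫) : (μ - ε) * ‖v‖ ^ 2 ≤ ⟪B v, v⟫ := by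
  have h : |⟪(B - A) v, v⟫| ≤ ε * ‖v‖ ^ 2 := calc
    |⟪(B - A) v, v⟫| ≤ ‖(B - A) v‖ * ‖v‖ := abs_real_inner_le_norm _ _
    _ ≤ ε * ‖v‖ * ‖v‖ := by
      gcongr
      exact (B - A).le_of_opNorm_le hAB v
    _ = ε * ‖v‖ ^ 2 := by ring
  rw [sub_apply, inner_sub_left] at h
  linarith [neg_le_of_abs_le h]

variable [CompleteSpace E] {F : E → ℝ}

theorem ContDiff.gradient_of_two (hF : ContDiff ℝ 2 F) : ContDiff ℝ 1 (gradient F) :=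
  (InnerProductSpace.toDual ℝ E).symm.contDiff.comp (hF.fderiv_right (by norm_num))

/-- First derivative along a line of a function with a quadratic subtracted. -/
theorem hasDerivAt_line_sub_sq (hF : ContDiff ℝ 2 F) (x v : E) (k t : ℝ) :
    HasDerivAt (fun s : ℝ => F (x + s • v) - k / 2 * s ^ 2)
      (⟪gradient F (x + t • v), v⟫ - k * t) t := by
  have h := (hF.differentiable two_ne_zero (x + t • v)).hasGradientAt.hasFDerivAt.comp_hasDerivAt t
    (hasDerivAt_add_smul x v t)
  rw [InnerProductSpace.toDual_apply_apply] at h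
  refine (h.sub ((hasDerivAt_pow 2 t).const_mul (k / 2))).congr_deriv ?_
  simp only [Nat.cast_ofNat, Nat.add_one_sub_one, pow_one]
  ring

/-- Second derivative along a line of a function with a quadratic subtracted. -/
theorem hasDerivAt_inner_gradient_line_sub (hF : ContDiff ℝ 2 F) (x v : E) (k t : ℝ) :
    HasDerivAt (fun s : ℝ => ⟪gradient F (x + s • v), v⟫ - k * s)
      (⟪fderiv ℝ (gradient F) (x + t • v) v, v⟫ - k) t := by
  have h := (hF.gradient_of_two.differentiable one_ne_zero (x + t • v)).hasFDerivAt.comp_hasDerivAt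
    t (hasDerivAt_add_smul x v t)
  refine ((h.inner ℝ (hasDerivAt_const t v)).sub ((hasDerivAt_id t).const_mul k)).congr_deriv ?_
  simp

/-- Quadratic growth at a point bounds the Hessian there from below. -/
theorem inner_fderiv_gradient_ge_of_quadratic_growth (hF : ContDiff ℝ 2 F) {μ : ℝ} (hμ : 0 ≤ μ)
    {x₀ : E} (hqg : ∀ x, μ / 2 * ‖x - x₀‖ ^ 2 ≤ F x - F x₀) (v : E) :
    μ * ‖v‖ ^ 2 ≤ ⟪fderiv ℝ (gradient F) x₀ v, v⟫ := by
  by_contra! hlt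
  obtain ⟨k, hHk, hkμ⟩ := exists_between hlt
  have hline (t : ℝ) : μ / 2 * (t ^ 2 * ‖v‖ ^ 2) ≤ F (x₀ + t • v) - F x₀ := by
    simpa [norm_smul, mul_pow] using hqg (x₀ + t • v)
  have hderiv : deriv (fun s : ℝ => F (x₀ + s • v) - k / 2 * s ^ 2) =
      fun s => ⟪gradient F (x₀ + s • v), v⟫ - k * s :=
    funext fun t => (hasDerivAt_line_sub_sq hF x₀ v k t).deriv
  have hcrit : IsLocalMin (fun s : ℝ => F (x₀ + s • v) - 0 / 2 * s ^ 2) 0 := by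
    refine Filter.Eventually.of_forall fun t => ?_
    have : 0 ≤ μ / 2 * (t ^ 2 * ‖v‖ ^ 2) := by positivity
    simpa using this.trans (hline t)
  have hgrad := hcrit.hasDerivAt_eq_zero (hasDerivAt_line_sub_sq hF x₀ v 0 0)
  have hmax : IsLocalMax (fun s : ℝ => F (x₀ + s • v) - k / 2 * s ^ 2) 0 := by
    refine isLocalMax_of_deriv_deriv_neg ?_ ?_
      (hasDerivAt_line_sub_sq hF x₀ v k 0).continuousAt
    · rw [hderiv, (hasDerivAt_inner_gradient_line_sub hF x₀ v k 0).deriv]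
      simpa using hHk
    · rw [hderiv]
      simpa using hgrad
  obtain ⟨t, ht, ht0⟩ := ((hmax.filter_mono nhdsWithin_le_nhds).and
    (self_mem_nhdsWithin : {(0 : ℝ)}ᶜ ∈ nhdsWithin 0 {0}ᶜ)).exists
  have htpos : 0 < t ^ 2 := sq_pos_of_ne_zero ht0
  have h := hline t
  simp only [zero_smul, add_zero, ne_eq, OfNat.ofNat_ne_zero, not_false_eq_true, zero_pow,
    mul_zero, sub_zero] at ht
  nlinarith [mul_lt_mul_of_pos_right hkμ htpos]

/-- A lower bound on the Hessian over a convex set gives strong convexity. -/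
theorem strongConvexOn_of_inner_fderiv_gradient_ge (hF : ContDiff ℝ 2 F) {s : Set E}
    (hs : Convex ℝ s) {m : ℝ}
    (hH : ∀ x ∈ s, ∀ v, m * ‖v‖ ^ 2 ≤ ⟪fderiv ℝ (gradient F) x v, v⟫) :
    StrongConvexOn s m F := by
  refine ⟨hs, fun x hx y hy a b ha hb hab => ?_⟩
  have hconv : ConvexOn ℝ (Set.Icc (0 : ℝ) 1)
      (fun t => F (x + t • (y - x)) - m * ‖y - x‖ ^ 2 / 2 * t ^ 2) := by
    refine convexOn_of_hasDerivWithinAt2_nonneg (convex_Icc 0 1)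
      (fun t _ => (hasDerivAt_line_sub_sq hF x (y - x) _ t).continuousAt.continuousWithinAt)
      (fun t _ => (hasDerivAt_line_sub_sq hF x (y - x) _ t).hasDerivWithinAt)
      (fun t _ => (hasDerivAt_inner_gradient_line_sub hF x (y - x) _ t).hasDerivWithinAt)
      fun t ht => sub_nonneg.2 (hH _ ?_ _)
    exact hs.add_smul_sub_mem hx hy (interior_subset ht)
  have h := hconv.2 (Set.left_mem_Icc.2 zero_le_one) (Set.right_mem_Icc.2 zero_le_one) ha hb hab
  have hpt : x + b • (y - x) = a • x + b • y := by
    rw [eq_sub_of_add_eq hab]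
    module
  simp only [smul_eq_mul, mul_zero, mul_one, zero_add, zero_smul, add_zero, one_smul,
    add_sub_cancel, hpt] at h
  rw [norm_sub_rev x y]
  obtain rfl := eq_sub_of_add_eq hab
  simp only [smul_eq_mul]
  linarith

end HessianOnLines

/-- a `C²` function with unique minimizer `x*` and `μ`-quadratic
growth has a Hessian bounded below by `μ` at `x*`, and for every `ε ∈ (0,μ)`
it is locally (on a ball around `x*`) with Hessian bounded below by `μ - ε`; in
particular it is strongly convex near `x*`.  The Hessian of `F` at `x` applied
to `v` is formalized as `fderiv ℝ (gradient F) x v`. -/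
theorem stmt_17 {E : Type*} [NormedAddCommGroup E] [InnerProductSpace ℝ E]
    [FiniteDimensional ℝ E]
    (F : E → ℝ) (hF : ContDiff ℝ 2 F)
    (μ : ℝ) (hμ : 0 < μ)
    (xstar : E) (hmin : ∀ x : E, F xstar ≤ F x)
    (huniq : ∀ y : E, (∀ x : E, F y ≤ F x) → y = xstar)
    (hqg : ∀ x : E, F x - F xstar ≥ μ / 2 * ‖x - xstar‖ ^ 2) :
    (∀ v : E, ⟪(fderiv ℝ (gradient F) xstar) v, v⟫ ≥ μ * ‖v‖ ^ 2) ∧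
    ∀ ε : ℝ, 0 < ε → ε < μ → ∃ η : ℝ, 0 < η ∧
      (∀ x ∈ Metric.ball xstar η, ∀ v : E,
        ⟪(fderiv ℝ (gradient F) x) v, v⟫ ≥ (μ - ε) * ‖v‖ ^ 2) ∧
      StrongConvexOn (Metric.ball xstar η) (μ - ε) F := by
  have hmain := inner_fderiv_gradient_ge_of_quadratic_growth hF hμ.le hqg
  refine ⟨hmain, fun ε hε _ => ?_⟩
  have hcont : Continuous (fderiv ℝ (gradient F)) :=
    hF.gradient_of_two.continuous_fderiv one_ne_zero
  obtain ⟨η, hη, hball⟩ := Metric.continuousAt_iff.1 hcont.continuousAt ε hε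
  have hH : ∀ x ∈ Metric.ball xstar η, ∀ v : E,
      (μ - ε) * ‖v‖ ^ 2 ≤ ⟪(fderiv ℝ (gradient F) x) v, v⟫ := fun x hx v =>
    inner_apply_self_ge_of_norm_sub_le ((dist_eq_norm _ _).symm.trans_le (hball hx).le) (hmain v)
  exact ⟨η, hη, hH, strongConvexOn_of_inner_fderiv_gradient_ge hF (convex_ball _ _) hH⟩
end

section
/- For every L > 0 and every μ > 0 there exists a differentiable function f : ℝ → ℝ with f(0) = 0 and f'(0) = 0, whose derivative f' is L-Lipschitz on [0,1], such that: (i) f'(x) ≥ (L/2)x for all x ∈ [0,1] (so 0 is the unique minimizer of f on [0,1]); (ii) f is (L/(μ+L), μ)-strongly quasar convex on [0,1] with respect to 0, i.e. for all x ∈ [0,1], f(x) − ((μ+L)/L) f'(x)·x + (μ/2)x² ≤ 0; and (iii) for every ε > 0 there exists x₀ ∈ (0, ε) at which f is twice differentiable with f''(x₀) = −L. In particular the lower curvature bound −L is attained in every neighborhood of the minimizer. -/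
/-- The ramp of slope `2` that starts at `a` and saturates at height `2 * a / 3`. -/
noncomputable def ramp (a x : ℝ) : ℝ := max 0 (min (2 * a / 3) (2 * (x - a)))

lemma ramp_nonneg (a x : ℝ) : 0 ≤ ramp a x := le_max_left _ _

lemma ramp_mono (a : ℝ) : Monotone (ramp a) := fun x y hxy => by
  unfold ramp
  gcongr

lemma ramp_le_add {a x y : ℝ} (hxy : x ≤ y) : ramp a y ≤ ramp a x + 2 * (y - x) := by
  unfold ramp
  grind

lemma ramp_le_half {a x : ℝ} (hx : 0 ≤ x) : ramp a x ≤ x / 2 := by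
  unfold ramp
  grind

lemma ramp_le_height {a : ℝ} (ha : 0 ≤ a) (x : ℝ) : ramp a x ≤ 2 * a / 3 := by
  unfold ramp
  grind

/-- The upper envelope of the ramps starting at the points `4⁻ⁿ`. -/
noncomputable def staircase (x : ℝ) : ℝ := ⨆ n : ℕ, ramp ((1 / 4) ^ n) x

lemma bddAbove_range_ramp (x : ℝ) :
    BddAbove (Set.range fun n : ℕ => ramp ((1 / 4) ^ n) x) := by
  refine ⟨2 / 3, ?_⟩
  rintro _ ⟨n, rfl⟩
  have h : ((1 / 4 : ℝ)) ^ n ≤ 1 := pow_le_one₀ (by norm_num) (by norm_num)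
  have := ramp_le_height (a := (1 / 4) ^ n) (by positivity) x
  dsimp only
  linarith

lemma staircase_nonneg (x : ℝ) : 0 ≤ staircase x :=
  Real.iSup_nonneg fun _ => ramp_nonneg _ _

lemma staircase_mono : Monotone staircase := fun _ y hxy =>
  ciSup_mono (bddAbove_range_ramp y) fun _ => ramp_mono _ hxy

lemma staircase_le_add {x y : ℝ} (hxy : x ≤ y) :
    staircase y ≤ staircase x + 2 * (y - x) :=
  ciSup_le fun n => (ramp_le_add hxy).trans <| by
    gcongr
    exact le_ciSup (bddAbove_range_ramp x) n

lemma staircase_le_half {x : ℝ} (hx : 0 ≤ x) : staircase x ≤ x / 2 :=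
  ciSup_le fun _ => ramp_le_half hx

lemma staircase_eq_on_step (n : ℕ) {x : ℝ} (hx₁ : 11 / 10 * (1 / 4) ^ n ≤ x)
    (hx₂ : x ≤ 13 / 10 * (1 / 4) ^ n) : staircase x = 2 * (x - (1 / 4) ^ n) := by
  have hpos : (0 : ℝ) < (1 / 4) ^ n := by positivity
  apply le_antisymm
  · refine ciSup_le fun m => ?_
    rcases lt_trichotomy m n with hmn | rfl | hmn
    · have h : ((1 / 4 : ℝ)) ^ n ≤ (1 / 4) ^ (m + 1) :=
        pow_le_pow_of_le_one (by norm_num) (by norm_num) hmn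
      rw [pow_succ] at h
      unfold ramp
      grind
    · unfold ramp
      grind
    · have h : ((1 / 4 : ℝ)) ^ m ≤ (1 / 4) ^ (n + 1) :=
        pow_le_pow_of_le_one (by norm_num) (by norm_num) hmn
      rw [pow_succ] at h
      have := ramp_le_height (a := (1 / 4) ^ m) (by positivity) x
      linarith
  · refine le_trans ?_ (le_ciSup (bddAbove_range_ramp x) n)
    unfold ramp
    grind

lemma hasDerivAt_staircase (n : ℕ) :
    HasDerivAt staircase 2 (6 / 5 * (1 / 4) ^ n) := by
  have hpos : (0 : ℝ) < (1 / 4) ^ n := by positivity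
  have hlin : HasDerivAt (fun x : ℝ => 2 * (x - (1 / 4) ^ n)) 2 (6 / 5 * (1 / 4) ^ n) := by
    simpa only [mul_one] using
      ((hasDerivAt_id' (6 / 5 * (1 / 4 : ℝ) ^ n)).sub_const ((1 / 4) ^ n)).const_mul 2
  refine hlin.congr_of_eventuallyEq ?_
  filter_upwards [Icc_mem_nhds (a := 11 / 10 * (1 / 4 : ℝ) ^ n)
    (b := 13 / 10 * (1 / 4 : ℝ) ^ n) (by linarith) (by linarith)] with x hx
  exact staircase_eq_on_step n hx.1 hx.2

lemma lipschitzWith_mul_sub_staircase {L : ℝ} (hL : 0 < L) :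
    LipschitzWith (Real.toNNReal L) fun x => L * (x - staircase x) := by
  refine LipschitzWith.of_dist_le_mul fun x y => ?_
  rw [Real.coe_toNNReal L hL.le, Real.dist_eq, Real.dist_eq, ← mul_sub, abs_mul, abs_of_pos hL]
  refine mul_le_mul_of_nonneg_left ?_ hL.le
  rcases le_total x y with h | h
  · have h₁ := staircase_mono h
    have h₂ := staircase_le_add h
    grind
  · have h₁ := staircase_mono h
    have h₂ := staircase_le_add h
    grind

/-- for all `L > 0` and `μ > 0` there exists a differentiable
`f : ℝ → ℝ` with `f 0 = 0`, `f' 0 = 0`, `f'` `L`-Lipschitz on `[0,1]`, such that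
(i) `f' x ≥ (L/2) x` on `[0,1]`, (ii) `f` is `(L/(μ+L), μ)`-strongly quasar
convex on `[0,1]` with respect to `0`, and (iii) in every right-neighborhood of
`0` there is a point where `f` is twice differentiable with second derivative
`-L`. -/
theorem stmt_18 :
    ∀ L : ℝ, 0 < L → ∀ μ : ℝ, 0 < μ →
      ∃ f : ℝ → ℝ, Differentiable ℝ f ∧ f 0 = 0 ∧ deriv f 0 = 0 ∧
        LipschitzOnWith (Real.toNNReal L) (deriv f) (Set.Icc 0 1) ∧
        (∀ x ∈ Set.Icc (0 : ℝ) 1, L / 2 * x ≤ deriv f x) ∧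
        (∀ x ∈ Set.Icc (0 : ℝ) 1,
          f x - (μ + L) / L * (deriv f x * x) + μ / 2 * x ^ 2 ≤ 0) ∧
        (∀ ε : ℝ, 0 < ε → ∃ x₀ ∈ Set.Ioo (0 : ℝ) ε,
          DifferentiableAt ℝ (deriv f) x₀ ∧ deriv (deriv f) x₀ = -L) := by
  intro L hL μ hμ
  set g : ℝ → ℝ := fun x => L * (x - staircase x) with hg
  have hLip : LipschitzWith (Real.toNNReal L) g := lipschitzWith_mul_sub_staircase hL
  have hF : ∀ x, HasDerivAt (fun x => ∫ t in (0 : ℝ)..x, g t) (g x) x := fun x =>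
    hLip.continuous.integral_hasStrictDerivAt 0 x |>.hasDerivAt
  have hderiv : deriv (fun x => ∫ t in (0 : ℝ)..x, g t) = g := funext fun x => (hF x).deriv
  have hlow : ∀ x ∈ Set.Icc (0 : ℝ) 1, L / 2 * x ≤ g x := fun x hx => by
    have := mul_le_mul_of_nonneg_left (staircase_le_half hx.1) hL.le
    simp only [hg]
    linarith
  refine ⟨fun x => ∫ t in (0 : ℝ)..x, g t, fun x => (hF x).differentiableAt, by simp, ?_⟩
  rw [hderiv]
  refine ⟨?_, hLip.lipschitzOnWith, hlow, fun x hx => ?_, fun ε hε => ?_⟩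
  · have h := staircase_le_half le_rfl
    have h' : staircase 0 = 0 := le_antisymm (by linarith) (staircase_nonneg 0)
    simp [hg, h']
  · have hint : ∫ t in (0 : ℝ)..x, g t ≤ L / 2 * x ^ 2 :=
      calc ∫ t in (0 : ℝ)..x, g t ≤ ∫ t in (0 : ℝ)..x, L * t := by
            refine intervalIntegral.integral_mono_on hx.1
              (hLip.continuous.intervalIntegrable _ _)
              ((continuous_const_mul L).intervalIntegrable _ _) fun t _ => ?_
            exact mul_le_mul_of_nonneg_left (sub_le_self _ (staircase_nonneg t)) hL.le
        _ = L / 2 * x ^ 2 := by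
            rw [intervalIntegral.integral_const_mul, integral_id]
            ring
    have hgx : (μ + L) / L * (L / 2 * x * x) ≤ (μ + L) / L * (g x * x) := by
      gcongr
      · exact hx.1
      · exact hlow x hx
    have hexp : (μ + L) / L * (L / 2 * x * x) = μ / 2 * x ^ 2 + L / 2 * x ^ 2 := by
      field_simp
    dsimp only
    linarith
  · obtain ⟨n, hn⟩ := exists_pow_lt_of_lt_one (show 0 < 5 / 6 * ε by positivity)
      (show (1 / 4 : ℝ) < 1 by norm_num)
    have hd : HasDerivAt g (-L) (6 / 5 * (1 / 4) ^ n) := by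
      have h := ((hasDerivAt_id' _).sub (hasDerivAt_staircase n)).const_mul L
      rwa [show L * (1 - 2) = -L by ring] at h
    exact ⟨6 / 5 * (1 / 4) ^ n, ⟨by positivity, by linarith⟩, hd.differentiableAt, hd.deriv⟩
end

section
/- There exists a differentiable function f : ℝ → ℝ with f(0) = 0 and f'(0) = 0 such that: (i) f has 5/12-quadratic growth on [0,1], i.e. f(x) ≥ (5/24)x² for all x ∈ [0,1] (so 0 is the unique minimizer of f on [0,1]); and (ii) f'(2^{−n}) = 0 for every integer n ≥ 0. In particular f has infinitely many critical points in every neighborhood of its minimizer 0. -/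
open Real in
/-- A multiple of `x ^ 2` modulated log-periodically, so that its critical points are invariant
under halving. -/
noncomputable def logPeriodicQuadratic (x : ℝ) : ℝ :=
  x ^ 2 * (π - log 2 * sin (2 * π / log 2 * log x))

namespace logPeriodicQuadratic

open Real

lemma abs_log_two_mul_sin_le_one (y : ℝ) : |log 2 * sin y| ≤ 1 := by
  have h2 : |log 2| ≤ 1 := by
    rw [abs_of_pos (log_pos one_lt_two)]
    linarith [log_le_sub_one_of_pos (zero_lt_two' ℝ)]
  rw [abs_mul]
  exact mul_le_one₀ h2 (abs_nonneg _) (abs_sin_le_one y)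

lemma hasDerivAt_zero : HasDerivAt logPeriodicQuadratic 0 0 := by
  have hO : logPeriodicQuadratic =O[nhds 0] fun x : ℝ => ‖x - 0‖ ^ 2 := by
    refine Asymptotics.IsBigO.of_bound (π + 1) (Filter.Eventually.of_forall fun x => ?_)
    have h := abs_le.mp (abs_log_two_mul_sin_le_one (2 * π / log 2 * log x))
    have hb : |π - log 2 * sin (2 * π / log 2 * log x)| ≤ π + 1 :=
      abs_le.mpr ⟨by linarith [pi_pos], by linarith⟩
    simp only [logPeriodicQuadratic, sub_zero, norm_eq_abs, abs_mul, abs_pow, abs_abs]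
    rw [mul_comm]
    gcongr
  simpa using (hO.hasFDerivAt one_lt_two).hasDerivAt

lemma hasDerivAt_of_ne_zero {x : ℝ} (hx : x ≠ 0) :
    HasDerivAt logPeriodicQuadratic
      (2 * x * (π - log 2 * sin (2 * π / log 2 * log x)
        - π * cos (2 * π / log 2 * log x))) x := by
  have hlog : log 2 ≠ 0 := (log_pos one_lt_two).ne'
  have h := (hasDerivAt_pow 2 x).mul
    (((((hasDerivAt_log hx).const_mul (2 * π / log 2)).sin).const_mul (log 2)).const_sub π)
  refine h.congr_deriv ?_
  field_simp
  ring

lemma differentiable : Differentiable ℝ logPeriodicQuadratic := fun x => by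
  rcases eq_or_ne x 0 with rfl | hx
  · exact hasDerivAt_zero.differentiableAt
  · exact (hasDerivAt_of_ne_zero hx).differentiableAt

lemma sq_le (x : ℝ) : x ^ 2 ≤ logPeriodicQuadratic x := by
  have h := abs_le.mp (abs_log_two_mul_sin_le_one (2 * π / log 2 * log x))
  exact le_mul_of_one_le_right (sq_nonneg x) (by linarith [pi_gt_three])

lemma deriv_half_pow (n : ℕ) : deriv logPeriodicQuadratic ((1 / 2 : ℝ) ^ n) = 0 := by
  have hlog : log 2 ≠ 0 := (log_pos one_lt_two).ne'
  have hy : 2 * π / log 2 * log ((1 / 2 : ℝ) ^ n) = -(n * (2 * π)) := by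
    rw [log_pow, one_div, log_inv]
    field_simp
  have hsin : sin (n * (2 * π)) = 0 := by simpa using sin_add_nat_mul_two_pi 0 n
  rw [(hasDerivAt_of_ne_zero (by positivity)).deriv, hy, sin_neg, cos_neg,
    cos_nat_mul_two_pi, hsin]
  ring

end logPeriodicQuadratic

/-- there exists a differentiable `f : ℝ → ℝ` with `f 0 = 0` and
`f' 0 = 0` which has `5/12`-quadratic growth on `[0,1]` (so `0` is its unique
minimizer there) and whose derivative vanishes at every point `2⁻ⁿ`, `n ≥ 0`:
infinitely many critical points in every neighborhood of the minimizer. -/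
theorem stmt_19 :
    ∃ f : ℝ → ℝ, Differentiable ℝ f ∧ f 0 = 0 ∧ deriv f 0 = 0 ∧
      (∀ x ∈ Set.Icc (0 : ℝ) 1, 5 / 24 * x ^ 2 ≤ f x) ∧
      (∀ n : ℕ, deriv f ((1 / 2 : ℝ) ^ n) = 0) := by
  refine ⟨logPeriodicQuadratic, logPeriodicQuadratic.differentiable,
    by simp [logPeriodicQuadratic], logPeriodicQuadratic.hasDerivAt_zero.deriv,
    fun x _ => ?_, logPeriodicQuadratic.deriv_half_pow⟩
  linarith [logPeriodicQuadratic.sq_le x, sq_nonneg x]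
end
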